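/- arXiv:1703.04557 — 6 statements merged into one kernel-verified Lean document; each statement's English description precedes it below -/
import Mathlib

section
/- Under the abstract setting, let s ≥ 1, v_* > 0, V : E → [v_*,∞) Borel, ψ : [v_*,∞) → (0,∞) Borel and locally bounded, α > 0, β ∈ ℝ, and let φ : [v_*,∞) → (0,∞) be continuous with C_φ := sup_{y≥v_*} φ(y)/y < ∞. Assume: (a) ℙ-almost surely sup_{n≥1} ( −(1/H_n) Σ_{k=1}^n η_k Ã_{γ_k}((ψ∘V)^{1/s})(X_{k−1}) ) < +∞; (b) the recursive control RC(ψ,φ,α,β) holds: there is n₀ such that for every n ≥ n₀ and every x ∈ E, Ã_{γ_n}(ψ∘V)(x) ≤ (ψ(V(x))/V(x))(β − α φ(V(x))), and liminf_{y→∞} φ(y) > β/α; (c) V tends to +∞ at infinity, i.e. for every M there is a compact K ⊆ E with V ≥ M on E∖K; (d) lim_{y→∞} φ(y) ψ(y)^{1/s} / y = +∞. Then ℙ-almost surely sup_{n≥1} ν_n(Ṽ_{ψ,φ,s}) < +∞, where Ṽ_{ψ,φ,s}(x) := φ(V(x)) ψ(V(x))^{1/s} / V(x); consequently, for ℙ-almost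 every ω the family of probability measures (ν_n(ω))_{n≥1} is tight (for every ε > 0 there is a compact K ⊆ E with sup_n ν_n(ω)(E∖K) ≤ ε). -/
open MeasureTheory ProbabilityTheory Filter Set

/-!
By Jensen's inequality and the tangent line of the concave function `u ↦ u ^ p` at `ψ (V x)`, with
`p = 1 / s`, the recursive control on `ψ ∘ V` passes to `(ψ ∘ V) ^ p`:

  `Ã ((ψ ∘ V) ^ p) ≤ p (ψ ^ p / y) (β - α φ)` at `y = V x`.

Since `φ` eventually stays above some `c > β / α`, a fraction of `α φ` absorbs `β` for large `y`,
while for bounded `y` the error is bounded; hence `Ã ((ψ ∘ V) ^ p) ≤ C - δ W` with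
`W = φ ψ ^ p / y`. Averaging along a trajectory, the lower bound on the averages of
`Ã ((ψ ∘ V) ^ p)` becomes an upper bound on those of `W`, and Markov's inequality gives tightness,
because `W` tends to infinity at infinity. The finitely many steps not subject to the recursive
control only enlarge `C`, trajectory by trajectory.
-/

section CenterMass

variable {ι R α : Type*} [Field R] {t : Finset ι} {w : ι → R} {f g : ι → α}

lemma centerMass_sub [AddCommGroup α] [Module R α] :
    (t.centerMass w fun i ↦ f i - g i) = t.centerMass w f - t.centerMass w g := by
  simp only [Finset.centerMass, smul_sub, Finset.sum_sub_distrib]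

variable [AddCommGroup α] [PartialOrder α] [Module R α]

-- Mathlib's `centerMass` is zero when the weights sum to zero.
lemma centerMass_const_le {a : α} (ha : 0 ≤ a) : (t.centerMass w fun _ ↦ a) ≤ a := by
  by_cases hw : ∑ i ∈ t, w i = 0
  · simpa only [Finset.centerMass, hw, inv_zero, zero_smul] using ha
  · exact (Finset.centerMass_const hw a).le

lemma centerMass_mono [LinearOrder R] [IsStrictOrderedRing R] [IsOrderedAddMonoid α]
    [PosSMulMono R α] (hw : ∀ i ∈ t, 0 ≤ w i) (hfg : ∀ i ∈ t, f i ≤ g i) :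
    t.centerMass w f ≤ t.centerMass w g :=
  smul_le_smul_of_nonneg_left
    (Finset.sum_le_sum fun i hi ↦ smul_le_smul_of_nonneg_left (hfg i hi) (hw i hi))
    (inv_nonneg.2 (Finset.sum_nonneg hw))

end CenterMass

section WeightedAverages

variable {ι R : Type*} [Field R] [LinearOrder R] [IsStrictOrderedRing R]
  {t : Finset ι} {η : ι → R}

lemma centerMass_le_div_of_le_sub_mul {a w : ι → R} {C c : R} (hη : ∀ i ∈ t, 0 ≤ η i)
    (hc : 0 < c) (hC : 0 ≤ C) (h : ∀ i ∈ t, a i ≤ C - c * w i) :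
    t.centerMass η w ≤ (C + -t.centerMass η a) / c := by
  rw [le_div_iff₀' hc]
  calc c * t.centerMass η w
      = t.centerMass η fun i ↦ c * w i := (Finset.centerMass_smul c t w).symm
    _ ≤ t.centerMass η fun i ↦ C - a i :=
        centerMass_mono hη fun i hi ↦ le_sub_comm.1 (h i hi)
    _ = t.centerMass η (fun _ ↦ C) - t.centerMass η a := centerMass_sub
    _ ≤ C + -t.centerMass η a := by
        rw [← sub_eq_add_neg]
        exact sub_le_sub_right (centerMass_const_le hC) _

variable {E : Type*} {x : ι → E} {W : E → R}

lemma centerMass_indicator_le_div {A : Set E} {c : R} (hη : ∀ i ∈ t, 0 ≤ η i) (hc : 0 < c)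
    (hW : ∀ z, 0 ≤ W z) (hA : ∀ z ∈ A, c ≤ W z) :
    (t.centerMass η fun i ↦ A.indicator (fun _ ↦ 1) (x i)) ≤
      (t.centerMass η fun i ↦ W (x i)) / c := by
  have indicator_le (z : E) : A.indicator (fun _ ↦ 1) z ≤ c⁻¹ * W z :=
    indicator_le' (fun z hz ↦ (le_inv_mul_iff₀ hc).2 ((mul_one c).trans_le (hA z hz)))
      (fun z _ ↦ mul_nonneg (inv_nonneg.2 hc.le) (hW z)) z
  rw [div_eq_inv_mul]
  exact (centerMass_mono hη fun i _ ↦ indicator_le (x i)).trans_eq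
    (Finset.centerMass_smul c⁻¹ t fun i ↦ W (x i))

end WeightedAverages

lemma exists_isCompact_forall_centerMass_indicator_compl_le {ι E : Type*} [TopologicalSpace E]
    {W : E → ℝ} (hW : ∀ z, 0 ≤ W z) (hWinf : Tendsto W (cocompact E) atTop) (M : ℝ) {ε : ℝ}
    (hε : 0 < ε) :
    ∃ K : Set E, IsCompact K ∧ ∀ (t : Finset ι) (η : ι → ℝ) (x : ι → E), (∀ i ∈ t, 0 ≤ η i) →
      (t.centerMass η fun i ↦ W (x i)) ≤ M →
        (t.centerMass η fun i ↦ Kᶜ.indicator (fun _ ↦ (1 : ℝ)) (x i)) ≤ ε := by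
  have hc : 0 < max M 1 / ε := by positivity
  obtain ⟨K, hK, hKW⟩ := mem_cocompact.1 (hWinf.eventually_ge_atTop (max M 1 / ε))
  refine ⟨K, hK, fun t η x hη hM ↦
    (centerMass_indicator_le_div hη hc hW fun z hz ↦ hKW hz).trans ?_⟩
  rw [div_le_iff₀' hc, div_mul_cancel₀ _ hε.ne']
  exact hM.trans (le_max_left M 1)

lemma tendsto_cocompact_atTop {E R : Type*} [TopologicalSpace E] [Preorder R] {f : E → R} :
    Tendsto f (cocompact E) atTop ↔ ∀ M, ∃ K, IsCompact K ∧ ∀ x ∉ K, M ≤ f x := by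
  simp only [tendsto_atTop, Filter.Eventually, mem_cocompact]
  rfl

lemma exists_nonneg_forall_le_of_eventually_le {u : ℕ → ℝ} {C : ℝ}
    (h : ∀ᶠ n in atTop, u n ≤ C) : ∃ D, 0 ≤ D ∧ ∀ n, u n ≤ D := by
  obtain ⟨D, hD⟩ := (isBoundedUnder_of_eventually_le h).bddAbove_range
  exact ⟨max D 0, le_max_right D 0, fun n ↦ le_max_of_le_left (hD (mem_range_self n))⟩

section PseudoGenerator

/-- The pseudo-generator `Ã f = (Q f - f) / h` of the transition kernel `Q` with time step `h`. -/
noncomputable def pseudoGenerator {E : Type*} [MeasurableSpace E] (Q : Kernel E E) (h : ℝ)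
    (f : E → ℝ) (x : E) : ℝ :=
  ((∫ y, f y ∂(Q x)) - f x) / h

lemma rpow_le_tangent {p a b : ℝ} (hp0 : 0 ≤ p) (hp1 : p ≤ 1) (ha : 0 < a) (hb : 0 ≤ b) :
    b ^ p ≤ a ^ p + p * a ^ (p - 1) * (b - a) := by
  have bernoulli : (b / a) ^ p ≤ 1 + p * (b / a - 1) := by
    have h := rpow_one_add_le_one_add_mul_self (s := b / a - 1)
      (by linarith [div_nonneg hb ha.le]) hp0 hp1
    rwa [add_sub_cancel] at h
  rw [Real.div_rpow hb ha.le, div_le_iff₀ (Real.rpow_pos_of_pos ha p)] at bernoulli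
  calc b ^ p ≤ (1 + p * (b / a - 1)) * a ^ p := bernoulli
    _ = a ^ p + p * a ^ (p - 1) * (b - a) := by
        rw [Real.rpow_sub_one ha.ne']
        field_simp

lemma integral_rpow_le_rpow_integral {Ω : Type*} [MeasurableSpace Ω] {μ : Measure Ω}
    [IsProbabilityMeasure μ] {f : Ω → ℝ} {p : ℝ} (hp0 : 0 ≤ p) (hp1 : p ≤ 1)
    (hf : ∀ x, 0 ≤ f x) (hfint : Integrable f μ) :
    ∫ x, f x ^ p ∂μ ≤ (∫ x, f x ∂μ) ^ p := by
  have hfpint : Integrable (fun x ↦ f x ^ p) μ := by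
    have norm_rpow_integrable := integrable_norm_rpow_of_le hfint.1 hp0 zero_le_one hp1
      (by simpa only [Real.rpow_one] using hfint.norm)
    simpa only [Real.norm_of_nonneg (hf _)] using norm_rpow_integrable
  exact (Real.concaveOn_rpow hp0 hp1).le_map_integral
    (Real.continuous_rpow_const hp0).continuousOn isClosed_Ici (ae_of_all μ hf) hfint hfpint

variable {E : Type*} [MeasurableSpace E] {Q : Kernel E E} [IsMarkovKernel Q] {h p : ℝ}
  {f : E → ℝ} {x : E}

lemma pseudoGenerator_rpow_le (hh : 0 ≤ h) (hp0 : 0 ≤ p) (hp1 : p ≤ 1) (hf : ∀ y, 0 ≤ f y)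
    (hfx : 0 < f x) (hfint : Integrable f (Q x)) :
    pseudoGenerator Q h (fun y ↦ f y ^ p) x ≤ p * f x ^ (p - 1) * pseudoGenerator Q h f x := by
  rw [pseudoGenerator, pseudoGenerator, ← mul_div_assoc]
  refine div_le_div_of_nonneg_right (sub_le_iff_le_add'.2 ?_) hh
  exact (integral_rpow_le_rpow_integral hp0 hp1 hf hfint).trans
    (rpow_le_tangent hp0 hp1 hfx (integral_nonneg hf))

lemma pseudoGenerator_rpow_le_of_le_mul {r : ℝ} (hh : 0 ≤ h) (hp0 : 0 ≤ p) (hp1 : p ≤ 1)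
    (hf : ∀ y, 0 ≤ f y) (hfx : 0 < f x) (hfint : Integrable f (Q x))
    (hr : pseudoGenerator Q h f x ≤ f x * r) :
    pseudoGenerator Q h (fun y ↦ f y ^ p) x ≤ p * (f x ^ p * r) := by
  calc pseudoGenerator Q h (fun y ↦ f y ^ p) x
      ≤ p * f x ^ (p - 1) * pseudoGenerator Q h f x :=
        pseudoGenerator_rpow_le hh hp0 hp1 hf hfx hfint
    _ ≤ p * f x ^ (p - 1) * (f x * r) := by gcongr
    _ = p * (f x ^ p * r) := by
        rw [Real.rpow_sub_one hfx.ne']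
        field_simp

end PseudoGenerator

section Drift

variable {α β c v : ℝ} {φ : ℝ → ℝ}

lemma exists_eventually_le_sub_mul {ι : Type*} {l : Filter ι} {u : ι → ℝ} (hα : 0 < α)
    (hc : β / α < c) (hu : ∀ᶠ i in l, c ≤ u i) :
    ∃ δ ∈ Ioc 0 α, ∀ᶠ i in l, β ≤ (α - δ) * u i := by
  rcases le_or_gt β 0 with hβ | hβ
  · exact ⟨α, ⟨hα, le_rfl⟩, .of_forall fun i ↦ by simpa using hβ⟩
  have hc0 : 0 < c := (div_pos hβ hα).trans hc
  refine ⟨α - β / c, ⟨sub_pos.2 ((div_lt_comm₀ hα hc0).1 hc),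
    sub_le_self α (div_pos hβ hc0).le⟩, hu.mono fun i hi ↦ ?_⟩
  calc β = β / c * c := (div_mul_cancel₀ β hc0.ne').symm
    _ ≤ β / c * u i := by gcongr
    _ = (α - (α - β / c)) * u i := by rw [sub_sub_cancel]

lemma exists_forall_mul_sub_le_sub_mul {g : ℝ → ℝ} (hα : 0 < α) (hg : ∀ y, v ≤ y → 0 ≤ g y)
    (hgloc : ∀ M, BddAbove (g '' Icc v M)) (hφ : ∀ y, v ≤ y → 0 ≤ φ y) (hc : β / α < c)
    (hφc : ∀ᶠ y in atTop, c ≤ φ y) :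
    ∃ δ > 0, ∃ C, ∀ y, v ≤ y → g y * (β - α * φ y) ≤ C - δ * (φ y * g y) := by
  obtain ⟨δ, ⟨hδ0, hδα⟩, hδ⟩ := exists_eventually_le_sub_mul hα hc hφc
  obtain ⟨Y, hY⟩ := eventually_atTop.1 hδ
  obtain ⟨B, hB⟩ := hgloc Y
  refine ⟨δ, hδ0, max 0 (B * |β|), fun y hy ↦ ?_⟩
  suffices excess_le : g y * (β - (α - δ) * φ y) ≤ max 0 (B * |β|) by linarith
  have hgy := hg y hy
  rcases le_total Y y with hYy | hyY
  · exact le_max_of_le_left (mul_nonpos_of_nonneg_of_nonpos hgy (sub_nonpos.2 (hY y hYy)))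
  · refine le_max_of_le_right ?_
    calc g y * (β - (α - δ) * φ y) ≤ g y * |β| := by
          gcongr
          exact (sub_le_self β (mul_nonneg (sub_nonneg.2 hδα) (hφ y hy))).trans (le_abs_self β)
      _ ≤ B * |β| := by
          gcongr
          exact hB (mem_image_of_mem g ⟨hy, hyY⟩)

lemma bddAbove_image_rpow_div {ψ : ℝ → ℝ} {p M : ℝ} (hp : 0 ≤ p) (hv : 0 < v)
    (hψ : ∀ y, v ≤ y → 0 ≤ ψ y) (hψloc : BddAbove (ψ '' Icc v M)) :
    BddAbove ((fun y ↦ ψ y ^ p / y) '' Icc v M) := by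
  obtain ⟨B, hB⟩ := hψloc
  refine ⟨B ^ p / v, forall_mem_image.2 fun y hy ↦ ?_⟩
  have hψy := hψ y hy.1
  have hψB : ψ y ≤ B := hB (mem_image_of_mem ψ hy)
  exact div_le_div₀ (Real.rpow_nonneg (hψy.trans hψB) p) (Real.rpow_le_rpow hψy hψB hp) hv hy.1

lemma exists_forall_pseudoGenerator_rpow_le {E : Type*} [MeasurableSpace E] {V : E → ℝ}
    {ψ : ℝ → ℝ} {p : ℝ} (hp0 : 0 < p) (hp1 : p ≤ 1) (hv : 0 < v) (hα : 0 < α)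
    (hV : ∀ z, v ≤ V z) (hψ : ∀ y, v ≤ y → 0 < ψ y) (hψloc : ∀ M, BddAbove (ψ '' Icc v M))
    (hφ : ∀ y, v ≤ y → 0 ≤ φ y) (hc : β / α < c) (hφc : ∀ᶠ y in atTop, c ≤ φ y) :
    ∃ δ > 0, ∃ C, ∀ (Q : Kernel E E) [IsMarkovKernel Q] (h : ℝ) (z : E), 0 ≤ h →
      Integrable (fun y ↦ ψ (V y)) (Q z) →
      pseudoGenerator Q h (fun y ↦ ψ (V y)) z ≤ ψ (V z) / V z * (β - α * φ (V z)) →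
      pseudoGenerator Q h (fun y ↦ ψ (V y) ^ p) z ≤ C - δ * (φ (V z) * ψ (V z) ^ p / V z) := by
  obtain ⟨δ, hδ, C, hC⟩ := exists_forall_mul_sub_le_sub_mul (g := fun y ↦ ψ y ^ p / y) hα
    (fun y hy ↦ div_nonneg (Real.rpow_nonneg (hψ y hy).le p) (hv.le.trans hy))
    (fun M ↦ bddAbove_image_rpow_div hp0.le hv (fun y hy ↦ (hψ y hy).le) (hψloc M)) hφ hc hφc
  refine ⟨p * δ, mul_pos hp0 hδ, p * C, fun Q _ h z hh hint hRC ↦ ?_⟩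
  calc pseudoGenerator Q h (fun y ↦ ψ (V y) ^ p) z
      ≤ p * (ψ (V z) ^ p * ((β - α * φ (V z)) / V z)) :=
        pseudoGenerator_rpow_le_of_le_mul hh hp0.le hp1 (fun y ↦ (hψ _ (hV y)).le)
          (hψ _ (hV z)) hint (hRC.trans_eq (by ring))
    _ = p * (ψ (V z) ^ p / V z * (β - α * φ (V z))) := by ring
    _ ≤ p * (C - δ * (φ (V z) * (ψ (V z) ^ p / V z))) := by
        gcongr
        exact hC (V z) (hV z)
    _ = p * C - p * δ * (φ (V z) * ψ (V z) ^ p / V z) := by ring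

end Drift

theorem stmt_1_general {E : Type*} [TopologicalSpace E] [MeasurableSpace E]
    {Q : ℕ → Kernel E E} [∀ n, IsMarkovKernel (Q n)] {γ η : ℕ → ℝ}
    (hγ : ∀ n, 1 ≤ n → 0 < γ n) (hη : ∀ n, 1 ≤ n → 0 ≤ η n) {x : ℕ → E}
    {p v α β c : ℝ} (hp0 : 0 < p) (hp1 : p ≤ 1) (hv : 0 < v) (hα : 0 < α)
    {V : E → ℝ} (hV : ∀ z, v ≤ V z) {ψ : ℝ → ℝ} (hψ : ∀ y, v ≤ y → 0 < ψ y)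
    (hψloc : ∀ M, BddAbove (ψ '' Icc v M)) {φ : ℝ → ℝ} (hφ : ∀ y, v ≤ y → 0 ≤ φ y)
    (ha : ∃ M, ∀ n, 1 ≤ n → -(Finset.Icc 1 n).centerMass η (fun k ↦
      pseudoGenerator (Q k) (γ k) (fun y ↦ ψ (V y) ^ p) (x (k - 1))) ≤ M)
    (hint : ∀ n, 1 ≤ n → ∀ z, Integrable (fun y ↦ ψ (V y)) (Q n z))
    (hRC : ∀ᶠ n in atTop, ∀ z, pseudoGenerator (Q n) (γ n) (fun y ↦ ψ (V y)) z ≤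
      ψ (V z) / V z * (β - α * φ (V z)))
    (hc : β / α < c) (hφc : ∀ᶠ y in atTop, c ≤ φ y) (hVinf : Tendsto V (cocompact E) atTop)
    (hd : Tendsto (fun y ↦ φ y * ψ y ^ p / y) atTop atTop) :
    (∃ M, ∀ n, 1 ≤ n → (Finset.Icc 1 n).centerMass η (fun k ↦
      φ (V (x (k - 1))) * ψ (V (x (k - 1))) ^ p / V (x (k - 1))) ≤ M) ∧
    ∀ ε, 0 < ε → ∃ K : Set E, IsCompact K ∧ ∀ n, 1 ≤ n →
      (Finset.Icc 1 n).centerMass η (fun k ↦ Kᶜ.indicator (fun _ ↦ (1 : ℝ)) (x (k - 1))) ≤ ε := by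
  set W : E → ℝ := fun z ↦ φ (V z) * ψ (V z) ^ p / V z
  set A : ℕ → ℝ := fun k ↦ pseudoGenerator (Q k) (γ k) (fun y ↦ ψ (V y) ^ p) (x (k - 1))
  have weights_nonneg (n : ℕ) : ∀ k ∈ Finset.Icc 1 n, 0 ≤ η k :=
    fun k hk ↦ hη k (Finset.mem_Icc.1 hk).1
  obtain ⟨δ, hδ, C, hC⟩ :=
    exists_forall_pseudoGenerator_rpow_le (E := E) hp0 hp1 hv hα hV hψ hψloc hφ hc hφc
  have drift : ∀ᶠ k in atTop, A k + δ * W (x (k - 1)) ≤ C := by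
    filter_upwards [hRC, eventually_ge_atTop 1] with k hk hk1
    exact le_sub_iff_add_le.1 (hC (Q k) (γ k) _ (hγ k hk1).le (hint k hk1 _) (hk _))
  obtain ⟨D, hD0, hD⟩ := exists_nonneg_forall_le_of_eventually_le drift
  obtain ⟨M, hM⟩ := ha
  have averages_le (n : ℕ) (hn : 1 ≤ n) :
      (Finset.Icc 1 n).centerMass η (fun k ↦ W (x (k - 1))) ≤ (D + M) / δ :=
    (centerMass_le_div_of_le_sub_mul (weights_nonneg n) hδ hD0
      fun k _ ↦ le_sub_iff_add_le.2 (hD k)).trans (by gcongr; exact hM n hn)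
  refine ⟨⟨_, averages_le⟩, fun ε hε ↦ ?_⟩
  have hW0 (z : E) : 0 ≤ W z := div_nonneg
    (mul_nonneg (hφ _ (hV z)) (Real.rpow_nonneg (hψ _ (hV z)).le p)) (hv.le.trans (hV z))
  obtain ⟨K, hK, hKε⟩ := exists_isCompact_forall_centerMass_indicator_compl_le (ι := ℕ) hW0
    (hd.comp hVinf) ((D + M) / δ) hε
  exact ⟨K, hK, fun n hn ↦ hKε _ η (fun k ↦ x (k - 1)) (weights_nonneg n) (averages_le n hn)⟩

/-- almost sure tightness of the weighted empirical measures
`ν_n = (1/H_n) Σ_{k=1}^n η_k δ_{X_{k−1}}`.  Under (a) the a.s. boundedness of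
`sup_n (−(1/H_n) Σ η_k Ã_{γ_k}((ψ∘V)^{1/s})(X_{k−1}))`, (b) the recursive control
`RC(ψ,φ,α,β)` with `liminf_{y→∞} φ(y) > β/α`, (c) `V → ∞` at infinity, and
(d) `φ(y)ψ(y)^{1/s}/y → ∞`, we get a.s. `sup_n ν_n(Ṽ_{ψ,φ,s}) < ∞`, and hence a.s.
tightness of `(ν_n)`: for every `ε > 0` there is a compact `K` with
`ν_n(E∖K) ≤ ε` for all `n ≥ 1`. -/
theorem stmt_1
    {E : Type*} [MeasurableSpace E] [MetricSpace E] [TopologicalSpace.SeparableSpace E]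
    [LocallyCompactSpace E] [BorelSpace E]
    {Ω : Type*} {m0 : MeasurableSpace Ω} {P : Measure Ω} [IsProbabilityMeasure P]
    (ℱ : Filtration ℕ m0)
    (γbar : ℝ) (hγbar : 0 < γbar) (γ η H : ℕ → ℝ)
    (hγ : ∀ n, 1 ≤ n → γ n ∈ Set.Ioc (0 : ℝ) γbar)
    (hγlim : Tendsto γ atTop (nhds 0))
    (hΓlim : Tendsto (fun n => ∑ k ∈ Finset.Icc 1 n, γ k) atTop atTop)
    (hη : ∀ n, 1 ≤ n → 0 ≤ η n)
    (hH : ∀ n, H n = ∑ k ∈ Finset.Icc 1 n, η k)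
    (hHlim : Tendsto H atTop atTop)
    (Q : ℝ → Kernel E E) [∀ c, IsMarkovKernel (Q c)]
    (X : ℕ → Ω → E)
    (hXad : ∀ n, Measurable[ℱ n] (X n))
    (hMarkov : ∀ (n : ℕ) (f : E → ℝ), Measurable f →
      Integrable (fun ω => f (X (n + 1) ω)) P →
      P[(fun ω => f (X (n + 1) ω)) | ℱ n]
        =ᵐ[P] fun ω => ∫ y, f y ∂(Q (γ (n + 1)) (X n ω)))
    -- data of the statement
    (s vstar α β : ℝ) (hs : 1 ≤ s) (hv : 0 < vstar) (hα : 0 < α)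
    (V : E → ℝ) (hVmeas : Measurable V) (hVlb : ∀ x, vstar ≤ V x)
    (ψ : ℝ → ℝ) (hψmeas : Measurable ψ) (hψpos : ∀ y, vstar ≤ y → 0 < ψ y)
    (hψloc : ∀ M, ∃ Cloc, ∀ y ∈ Set.Icc vstar M, ψ y ≤ Cloc)
    (φ : ℝ → ℝ) (hφcont : ContinuousOn φ (Set.Ici vstar))
    (hφpos : ∀ y, vstar ≤ y → 0 < φ y)
    (Cφ : ℝ) (hCφ : ∀ y, vstar ≤ y → φ y / y ≤ Cφ)
    (hQint : ∀ c ∈ Set.Ioc (0 : ℝ) γbar, ∀ x : E,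
      Integrable (fun y => (ψ (V y)) ^ (1 / s)) (Q c x))
    -- (a) a.s. boundedness of the sup of the weighted sums of the pseudo-generator
    (ha : ∀ᵐ ω ∂P, ∃ M : ℝ, ∀ n, 1 ≤ n →
      -((H n)⁻¹ * ∑ k ∈ Finset.Icc 1 n, η k *
          (((∫ y, (ψ (V y)) ^ (1 / s) ∂(Q (γ k) (X (k - 1) ω)))
              - (ψ (V (X (k - 1) ω))) ^ (1 / s)) / γ k)) ≤ M)
    -- (b) recursive control RC(ψ,φ,α,β)
    (hQintψ : ∀ c ∈ Set.Ioc (0 : ℝ) γbar, ∀ x : E,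
      Integrable (fun y => ψ (V y)) (Q c x))
    (n₀ : ℕ) (hRC : ∀ n, n₀ ≤ n → 1 ≤ n → ∀ x : E,
      ((∫ y, ψ (V y) ∂(Q (γ n) x)) - ψ (V x)) / γ n
        ≤ (ψ (V x) / V x) * (β - α * φ (V x)))
    (hliminf : ∃ c : ℝ, β / α < c ∧ ∀ᶠ y in atTop, c ≤ φ y)
    -- (c) V tends to infinity at infinity
    (hVinf : ∀ M : ℝ, ∃ K : Set E, IsCompact K ∧ ∀ x ∉ K, M ≤ V x)
    -- (d)
    (hd : Tendsto (fun y => φ y * (ψ y) ^ (1 / s) / y) atTop atTop) :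
    ∀ᵐ ω ∂P,
      (∃ M : ℝ, ∀ n, 1 ≤ n →
        (H n)⁻¹ * ∑ k ∈ Finset.Icc 1 n, η k *
          (φ (V (X (k - 1) ω)) * (ψ (V (X (k - 1) ω))) ^ (1 / s) / V (X (k - 1) ω)) ≤ M)
      ∧ (∀ ε : ℝ, 0 < ε → ∃ K : Set E, IsCompact K ∧ ∀ n, 1 ≤ n →
          (H n)⁻¹ * ∑ k ∈ Finset.Icc 1 n, η k * (Kᶜ.indicator (fun _ => (1 : ℝ)) (X (k - 1) ω))
            ≤ ε) := by
  obtain rfl := funext hH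
  obtain ⟨c, hc, hφc⟩ := hliminf
  filter_upwards [ha] with ω hω
  exact stmt_1_general (Q := fun n ↦ Q (γ n)) (x := fun n ↦ X n ω) (fun n hn ↦ (hγ n hn).1) hη
    (one_div_pos.2 (one_pos.trans_le hs)) (div_le_one_of_le₀ hs (zero_le_one.trans hs)) hv hα
    hVlb hψpos (fun M ↦ (hψloc M).imp fun _ ↦ forall_mem_image.2) (fun y hy ↦ (hφpos y hy).le)
    hω (fun n hn ↦ hQintψ _ (hγ n hn))
    (eventually_atTop.2 ⟨max n₀ 1, fun n hn ↦
      hRC n (le_of_max_le_left hn) (le_of_max_le_right hn)⟩)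
    hc hφc (tendsto_cocompact_atTop.2 hVinf) hd
end

section
/- Under the abstract setting, let f : E → ℝ be bounded measurable and let Af : E → ℝ be a measurable function such that |Ã_γ f(x) − Af(x)| ≤ Λ_f(x,γ) for all x ∈ E and γ ∈ (0,γ̄], where Λ_f has the representation Λ_f(x,γ) = Σ_{i=1}^q g_i(x) 𝔼̃[Λ̃_{f,i}(x,γ,·)] with q ∈ ℕ, g = (g_1,…,g_q) : E → [0,∞)^q locally bounded Borel, (Ω̃,𝒢̃,ℙ̃) a probability space and Λ̃_f : E×(0,γ̄]×Ω̃ → [0,∞)^q measurable with max_i 𝔼̃[sup_{x∈E} sup_{γ∈(0,γ̄]} Λ̃_{f,i}(x,γ,·)] < ∞, and where each coordinate i satisfies either condition (I): ℙ̃-a.s., (i) for every compact K ⊆ E, lim_{γ→0} sup_{x∈K} Λ̃_{f,i}(x,γ,ω̃) = 0, and (ii) there is γ̲(ω̃) ∈ (0,γ̄] such that for every ε > 0 there is a compact K_ε with sup_{x∈E∖K_ε} sup_{γ∈(0,γ̲(ω̃)]} Λ̃_{f,i}(x,γ,ω̃) < ε; or condition (II): ℙ̃-a.s., lim_{γ→0}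 sup_{x∈E} Λ̃_{f,i}(x,γ,ω̃) g_i(x) = 0. Assume moreover that ℙ-almost surely sup_{n} ν_n(g_i) < ∞ for each i, and that ℙ-almost surely lim_{n→∞} (1/H_n) Σ_{k=1}^n η_k Ã_{γ_k} f(X_{k−1}) = 0. Then ℙ-almost surely, lim_{n→∞} ν_n(Af) = 0. -/
open MeasureTheory ProbabilityTheory Filter Set

/-!
Normalising by `1 + g_i` unifies the two conditions: under (I) the coordinate `Λ̃_{f,i}` tends
to `0` uniformly on `E`, under (II) the product `g_i Λ̃_{f,i}` does, and in either case
`g_i(x) Λ̃_{f,i}(x, c) = o(1 + g_i(x))` as `c → 0⁺`, uniformly in `x`. Uniformity in `x` is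
encoded by the countably generated filter `𝓝[>] 0 ×ˢ ⊤` on `ℝ × E`, so dominated convergence along
this filter passes the estimate to the expectation and gives
`Ã_c f(x) - Af(x) = o(1 + ∑ i, g_i(x))` uniformly in `x`. Along a path on which the weighted
averages of the `g_i` are bounded, the weighted averages of this error therefore tend to `0` by a
Toeplitz argument.
-/

section Approximation

open Topology Asymptotics

section UniformConvergence

variable {ι E β : Type*} [TopologicalSpace E] [UniformSpace β]

lemma tendstoUniformly_of_isCompact_of_cocompact {F : ι → E → β} {φ : E → β} {l : Filter ι}
    (hcompact : ∀ K, IsCompact K → TendstoUniformlyOn F φ l K)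
    (hinfinity : TendstoUniformlyOnFilter F φ l (cocompact E)) :
    TendstoUniformly F φ l := by
  intro u hu
  obtain ⟨p, hp, r, hr, hpr⟩ := eventually_prod_iff.1 (hinfinity u hu)
  obtain ⟨K, hK, hKr⟩ := mem_cocompact.1 hr
  filter_upwards [hp, hcompact K hK u hu] with i hi hiK x
  by_cases hx : x ∈ K
  · exact hiK x hx
  · exact hpr hi (hKr hx)

end UniformConvergence

section VanishingConditions

variable {E : Type*} {b : ℝ} {F : E → ℝ → ℝ}

/-- Condition (II) for `F = g_i Λ̃_{f,i}` at a fixed `ω̃`: `sup_x F x c → 0` as `c → 0⁺`,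
the time step `c` ranging over `(0, b]`. -/
def VanishesUniformly (b : ℝ) (F : E → ℝ → ℝ) : Prop :=
  ∀ ε : ℝ, 0 < ε → ∃ δ : ℝ, 0 < δ ∧ ∀ c ∈ Ioc (0 : ℝ) b, c < δ → ∀ x : E, F x c ≤ ε

/-- Condition (I) for `F = Λ̃_{f,i}` at a fixed `ω̃`: as `c → 0⁺` in `(0, b]`, `F` vanishes
uniformly on compact sets, and it is small off compact sets uniformly in `c ∈ (0, γlow]`, where
`γlow` does not depend on the required smallness. -/
def VanishesOnCompactsAndAtInfinity [TopologicalSpace E] (b : ℝ) (F : E → ℝ → ℝ) : Prop :=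
  (∀ K : Set E, IsCompact K → ∀ ε : ℝ, 0 < ε → ∃ δ : ℝ, 0 < δ ∧
    ∀ c ∈ Ioc (0 : ℝ) b, c < δ → ∀ x ∈ K, F x c ≤ ε) ∧
  ∃ γlow : ℝ, γlow ∈ Ioc (0 : ℝ) b ∧ ∀ ε : ℝ, 0 < ε →
    ∃ K : Set E, IsCompact K ∧ ∀ x ∉ K, ∀ c ∈ Ioc (0 : ℝ) γlow, F x c ≤ ε

lemma tendstoUniformlyOn_zero_of_forall_exists_le {s : Set E} (hb : 0 < b) (hF : ∀ x c, 0 ≤ F x c)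
    (h : ∀ ε : ℝ, 0 < ε → ∃ δ : ℝ, 0 < δ ∧
      ∀ c ∈ Ioc (0 : ℝ) b, c < δ → ∀ x ∈ s, F x c ≤ ε) :
    TendstoUniformlyOn (fun c x => F x c) (fun _ => 0) (𝓝[>] 0) s := by
  refine Metric.tendstoUniformlyOn_iff.2 fun ε hε => ?_
  obtain ⟨δ, hδ, hle⟩ := h (ε / 2) (half_pos hε)
  filter_upwards [Ioc_mem_nhdsGT hb, Ioo_mem_nhdsGT hδ] with c hcb hcδ x hx
  rw [dist_zero_left, Real.norm_of_nonneg (hF x c)]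
  exact (hle c hcb hcδ.2 x hx).trans_lt (half_lt_self hε)

lemma VanishesUniformly.tendstoUniformly (h : VanishesUniformly b F) (hb : 0 < b)
    (hF : ∀ x c, 0 ≤ F x c) :
    TendstoUniformly (fun c x => F x c) (fun _ => 0) (𝓝[>] 0) := by
  refine tendstoUniformlyOn_univ.1
    (tendstoUniformlyOn_zero_of_forall_exists_le hb hF fun ε hε => ?_)
  obtain ⟨δ, hδ, hle⟩ := h ε hε
  exact ⟨δ, hδ, fun c hc hcδ x _ => hle c hc hcδ x⟩

lemma VanishesOnCompactsAndAtInfinity.tendstoUniformly [TopologicalSpace E]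
    (h : VanishesOnCompactsAndAtInfinity b F) (hb : 0 < b) (hF : ∀ x c, 0 ≤ F x c) :
    TendstoUniformly (fun c x => F x c) (fun _ => 0) (𝓝[>] 0) := by
  obtain ⟨hcompact, γlow, hγlow, hinfinity⟩ := h
  refine tendstoUniformly_of_isCompact_of_cocompact
    (fun K hK => tendstoUniformlyOn_zero_of_forall_exists_le hb hF (hcompact K hK)) ?_
  refine Metric.tendstoUniformlyOnFilter_iff.2 fun ε hε => ?_
  obtain ⟨K, hK, hle⟩ := hinfinity (ε / 2) (half_pos hε)
  filter_upwards [prod_mem_prod (Ioc_mem_nhdsGT hγlow.1) hK.compl_mem_cocompact] with p hp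
  rw [dist_zero_left, Real.norm_of_nonneg (hF _ _)]
  exact (hle p.2 hp.2 p.1 hp.1).trans_lt (half_lt_self hε)

end VanishingConditions

section DominatedConvergence

variable {ι Ω G : Type*} [MeasurableSpace Ω] {μ : Measure Ω} [NormedAddCommGroup G]
  {l : Filter ι}

lemma isLittleO_integral_of_dominated [NormedSpace ℝ G] [l.IsCountablyGenerated]
    {F : ι → Ω → G} {v : ι → ℝ} {bound : Ω → ℝ}
    (hmeas : ∀ᶠ i in l, AEStronglyMeasurable (F i) μ) (hbound : Integrable bound μ)
    (hF : ∀ᶠ i in l, ∀ᵐ ω ∂μ, ‖F i ω‖ ≤ bound ω * ‖v i‖)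
    (hlim : ∀ᵐ ω ∂μ, (fun i => F i ω) =o[l] v) :
    (fun i => ∫ ω, F i ω ∂μ) =o[l] v := by
  have hratio : Tendsto (fun i => ∫ ω, ‖F i ω‖ / ‖v i‖ ∂μ) l (𝓝 (∫ _, 0 ∂μ)) := by
    refine tendsto_integral_filter_of_dominated_convergence (fun ω => ‖bound ω‖) ?_ ?_
      hbound.norm ?_
    · filter_upwards [hmeas] with i hi
      exact (hi.norm.aemeasurable.div_const _).aestronglyMeasurable
    · filter_upwards [hF] with i hi
      filter_upwards [hi] with ω hω
      rw [Real.norm_of_nonneg (by positivity)]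
      refine div_le_of_le_mul₀ (norm_nonneg _) (norm_nonneg _) (hω.trans ?_)
      gcongr
      exact Real.le_norm_self _
    · filter_upwards [hlim] with ω hω
      exact hω.norm_norm.tendsto_div_nhds_zero
  have hnorm : (fun i => ∫ ω, ‖F i ω‖ ∂μ) =o[l] fun i => ‖v i‖ := by
    refine (isLittleO_iff_tendsto' ?_).2 ?_
    · filter_upwards [hF] with i hi hvi
      refine integral_eq_zero_of_ae ?_
      filter_upwards [hi] with ω hω
      simpa only [hvi, mul_zero, norm_le_zero_iff, Pi.zero_apply, norm_eq_zero] using hω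
    · simpa only [integral_div, integral_zero] using hratio
  exact (IsBigO.of_norm_le fun i => norm_integral_le_integral_norm _).trans_isLittleO
    hnorm.of_norm_right

lemma isLittleO_one_add_of_tendsto_zero_or {a g : ι → ℝ} (hg : ∀ i, 0 ≤ g i)
    (h : Tendsto a l (𝓝 0) ∨ Tendsto (fun i => a i * g i) l (𝓝 0)) :
    (fun i => g i * a i) =o[l] fun i => 1 + g i := by
  have hle : ∀ i, ‖g i‖ ≤ 1 + g i ∧ ‖(1 : ℝ)‖ ≤ 1 + g i := fun i => by
    rw [Real.norm_of_nonneg (hg i), norm_one]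
    exact ⟨by linarith, by linarith [hg i]⟩
  rcases h with ha | hag
  · simpa only [mul_one] using (IsBigO.of_norm_le fun i => (hle i).1).mul_isLittleO
      ((isLittleO_one_iff ℝ).2 ha)
  · simpa only [mul_comm] using ((isLittleO_one_iff ℝ).2 hag).trans_isBigO
      (IsBigO.of_norm_le fun i => (hle i).2)

lemma isLittleO_mul_integral_one_add [l.IsCountablyGenerated]
    {Λ : ι → Ω → ℝ} {g : ι → ℝ} {S : Ω → ℝ} (hg : ∀ i, 0 ≤ g i)
    (hmeas : ∀ i, AEStronglyMeasurable (Λ i) μ) (hS : Integrable S μ)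
    (hbound : ∀ᶠ i in l, ∀ᵐ ω ∂μ, ‖Λ i ω‖ ≤ S ω)
    (hlim : ∀ᵐ ω ∂μ, (fun i => g i * Λ i ω) =o[l] fun i => 1 + g i) :
    (fun i => g i * ∫ ω, Λ i ω ∂μ) =o[l] fun i => 1 + g i := by
  simp only [← integral_const_mul]
  refine isLittleO_integral_of_dominated (Eventually.of_forall fun i => (hmeas i).const_mul (g i))
    hS ?_ hlim
  filter_upwards [hbound] with i hi
  filter_upwards [hi] with ω hω
  have hSω : 0 ≤ S ω := (norm_nonneg _).trans hω
  rw [norm_mul, mul_comm, Real.norm_of_nonneg (hg i),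
    Real.norm_of_nonneg (add_nonneg zero_le_one (hg i))]
  gcongr
  · exact hg i
  · linarith

end DominatedConvergence

section WeightedAverage

/-- The average of `a 1, …, a n` with weights `η 1, …, η n`, which is `ν_n(h)` when
`a k = h (X (k - 1))`. Its value is `0` when the total weight vanishes. -/
noncomputable def weightedAverage (η a : ℕ → ℝ) (n : ℕ) : ℝ :=
  (∑ k ∈ Finset.Icc 1 n, η k)⁻¹ * ∑ k ∈ Finset.Icc 1 n, η k * a k

variable {η a v : ℕ → ℝ}

lemma weightedAverage_sub (η a v : ℕ → ℝ) (n : ℕ) :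
    weightedAverage η (fun k => a k - v k) n = weightedAverage η a n - weightedAverage η v n := by
  simp only [weightedAverage, mul_sub, Finset.sum_sub_distrib]

lemma sum_Icc_one_eq_sum_range {M : Type*} [AddCommMonoid M] (u : ℕ → M) (n : ℕ) :
    ∑ k ∈ Finset.Icc 1 n, u k = ∑ k ∈ Finset.range n, u (k + 1) := by
  rw [Finset.range_eq_Ico, Finset.sum_Ico_add', zero_add]
  rfl

lemma isLittleO_sum_Icc_one {G : Type*} [NormedAddCommGroup G] {f : ℕ → G} (h : f =o[atTop] a)
    (ha : ∀ k, 1 ≤ k → 0 ≤ a k)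
    (hsum : Tendsto (fun n => ∑ k ∈ Finset.Icc 1 n, a k) atTop atTop) :
    (fun n => ∑ k ∈ Finset.Icc 1 n, f k) =o[atTop] fun n => ∑ k ∈ Finset.Icc 1 n, a k := by
  simp only [sum_Icc_one_eq_sum_range] at hsum ⊢
  exact (h.comp_tendsto (tendsto_add_atTop_nat 1)).sum_range (fun k => ha (k + 1) (by lia)) hsum

lemma tendsto_weightedAverage_zero_iff
    (hη : Tendsto (fun n => ∑ k ∈ Finset.Icc 1 n, η k) atTop atTop) :
    Tendsto (weightedAverage η a) atTop (𝓝 0) ↔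
      (fun n => ∑ k ∈ Finset.Icc 1 n, η k * a k) =o[atTop]
        fun n => ∑ k ∈ Finset.Icc 1 n, η k := by
  have hne : ∀ᶠ n in atTop, ∑ k ∈ Finset.Icc 1 n, η k ≠ 0 := hη.eventually_ne_atTop 0
  rw [isLittleO_iff_tendsto' (hne.mono fun n hn h => absurd h hn)]
  exact tendsto_congr fun n => inv_mul_eq_div _ _

lemma isBigO_sum_of_weightedAverage_le {M : ℝ} (hη : ∀ k, 1 ≤ k → 0 ≤ η k) (ha : ∀ k, 0 ≤ a k)
    (hηsum : Tendsto (fun n => ∑ k ∈ Finset.Icc 1 n, η k) atTop atTop)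
    (hM : ∀ n, 1 ≤ n → weightedAverage η a n ≤ M) :
    (fun n => ∑ k ∈ Finset.Icc 1 n, η k * a k) =O[atTop]
      fun n => ∑ k ∈ Finset.Icc 1 n, η k := by
  refine IsBigO.of_bound M ?_
  filter_upwards [hηsum.eventually_gt_atTop 0, eventually_ge_atTop 1] with n hpos hn
  have hsum : 0 ≤ ∑ k ∈ Finset.Icc 1 n, η k * a k :=
    Finset.sum_nonneg fun k hk => mul_nonneg (hη k (Finset.mem_Icc.1 hk).1) (ha k)
  rw [Real.norm_of_nonneg hsum, Real.norm_of_nonneg hpos.le, ← div_le_iff₀ hpos, div_eq_inv_mul]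
  exact hM n hn

lemma tendsto_weightedAverage_zero_of_isLittleO (hη : ∀ k, 1 ≤ k → 0 ≤ η k)
    (hηsum : Tendsto (fun n => ∑ k ∈ Finset.Icc 1 n, η k) atTop atTop) (hv : ∀ k, 0 ≤ v k)
    (hvsum : (fun n => ∑ k ∈ Finset.Icc 1 n, η k * v k) =O[atTop]
      fun n => ∑ k ∈ Finset.Icc 1 n, η k)
    (h : a =o[atTop] fun k => 1 + v k) :
    Tendsto (weightedAverage η a) atTop (𝓝 0) := by
  have hsplit (n : ℕ) : ∑ k ∈ Finset.Icc 1 n, η k * (1 + v k) =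
      ∑ k ∈ Finset.Icc 1 n, η k + ∑ k ∈ Finset.Icc 1 n, η k * v k := by
    simp only [mul_add, mul_one, Finset.sum_add_distrib]
  have hnonneg (k : ℕ) (hk : 1 ≤ k) : 0 ≤ η k * v k := mul_nonneg (hη k hk) (hv k)
  refine (tendsto_weightedAverage_zero_iff hηsum).2 ?_
  refine IsLittleO.trans_isBigO (isLittleO_sum_Icc_one ((isBigO_refl η atTop).mul_isLittleO h)
    (fun k hk => mul_nonneg (hη k hk) (add_nonneg zero_le_one (hv k))) ?_) ?_
  · refine tendsto_atTop_mono (fun n => ?_) hηsum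
    rw [hsplit]
    exact le_add_of_nonneg_right
      (Finset.sum_nonneg fun k hk => hnonneg k (Finset.mem_Icc.1 hk).1)
  · simpa only [hsplit] using (isBigO_refl _ atTop).add hvsum

end WeightedAverage

section Identification

variable {E ι Ω : Type*} [Fintype ι] [MeasurableSpace Ω] {μ : Measure Ω}
  {b : ℝ} {A : ℝ → E → ℝ} {Af : E → ℝ} {g : E → ι → ℝ} {Λ : E → ℝ → Ω → ι → ℝ} {S : Ω → ℝ}

lemma isLittleO_sub_one_add_sum [TopologicalSpace E] (hb : 0 < b) (hg : ∀ x i, 0 ≤ g x i)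
    (hΛmeas : ∀ x c i, AEStronglyMeasurable (fun ω => Λ x c ω i) μ)
    (hΛ : ∀ x c ω i, 0 ≤ Λ x c ω i) (hS : Integrable S μ)
    (hΛS : ∀ᵐ ω ∂μ, ∀ i x, ∀ c ∈ Ioc (0 : ℝ) b, Λ x c ω i ≤ S ω)
    (happrox : ∀ c ∈ Ioc (0 : ℝ) b, ∀ x, |A c x - Af x| ≤ ∑ i, g x i * ∫ ω, Λ x c ω i ∂μ)
    (hvanish : ∀ i, (∀ᵐ ω ∂μ, VanishesOnCompactsAndAtInfinity b fun x c => Λ x c ω i) ∨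
      ∀ᵐ ω ∂μ, VanishesUniformly b fun x c => Λ x c ω i * g x i) :
    (fun p : ℝ × E => A p.1 p.2 - Af p.2) =o[𝓝[>] 0 ×ˢ ⊤] fun p => 1 + ∑ i, g p.2 i := by
  have hstep : ∀ᶠ p : ℝ × E in 𝓝[>] 0 ×ˢ ⊤, p.1 ∈ Ioc 0 b :=
    tendsto_fst.eventually (Ioc_mem_nhdsGT hb)
  have hlim (i : ι) : ∀ᵐ ω ∂μ, (fun p : ℝ × E => g p.2 i * Λ p.2 p.1 ω i)
      =o[𝓝[>] 0 ×ˢ ⊤] fun p => 1 + g p.2 i := by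
    rcases hvanish i with hI | hII
    · filter_upwards [hI] with ω hω
      exact isLittleO_one_add_of_tendsto_zero_or (fun p => hg p.2 i)
        (.inl (tendsto_prod_top_iff.2 (hω.tendstoUniformly hb fun x c => hΛ x c ω i)))
    · filter_upwards [hII] with ω hω
      exact isLittleO_one_add_of_tendsto_zero_or (fun p => hg p.2 i)
        (.inr (tendsto_prod_top_iff.2
          (hω.tendstoUniformly hb fun x c => mul_nonneg (hΛ x c ω i) (hg x i))))
  have hcoord (i : ι) : (fun p : ℝ × E => g p.2 i * ∫ ω, Λ p.2 p.1 ω i ∂μ)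
      =o[𝓝[>] 0 ×ˢ ⊤] fun p => 1 + g p.2 i := by
    refine isLittleO_mul_integral_one_add (fun p => hg p.2 i) (fun p => hΛmeas p.2 p.1 i) hS ?_
      (hlim i)
    filter_upwards [hstep] with p hp
    filter_upwards [hΛS] with ω hω
    rw [Real.norm_of_nonneg (hΛ _ _ _ _)]
    exact hω i p.2 p.1 hp
  have hsum (x : E) (i : ι) : ‖1 + g x i‖ ≤ 1 + ∑ j, g x j := by
    rw [Real.norm_of_nonneg (add_nonneg zero_le_one (hg x i))]
    gcongr
    exact Finset.single_le_sum (fun j _ => hg x j) (Finset.mem_univ i)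
  refine IsBigO.trans_isLittleO ?_ (IsLittleO.fun_sum (s := Finset.univ) fun i _ =>
    (hcoord i).trans_isBigO (IsBigO.of_norm_le fun p => hsum p.2 i))
  exact IsBigO.of_norm_eventuallyLE (hstep.mono fun p hp => happrox p.1 hp p.2)

theorem stmt_3_general [TopologicalSpace E] (hb : 0 < b) {γ η : ℕ → ℝ}
    (hγ : ∀ n, 1 ≤ n → γ n ∈ Ioc (0 : ℝ) b) (hγlim : Tendsto γ atTop (𝓝 0))
    (hη : ∀ n, 1 ≤ n → 0 ≤ η n)
    (hηsum : Tendsto (fun n => ∑ k ∈ Finset.Icc 1 n, η k) atTop atTop)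
    (hg : ∀ x i, 0 ≤ g x i)
    (hΛmeas : ∀ x c i, AEStronglyMeasurable (fun ω => Λ x c ω i) μ)
    (hΛ : ∀ x c ω i, 0 ≤ Λ x c ω i) (hS : Integrable S μ)
    (hΛS : ∀ᵐ ω ∂μ, ∀ i x, ∀ c ∈ Ioc (0 : ℝ) b, Λ x c ω i ≤ S ω)
    (happrox : ∀ c ∈ Ioc (0 : ℝ) b, ∀ x, |A c x - Af x| ≤ ∑ i, g x i * ∫ ω, Λ x c ω i ∂μ)
    (hvanish : ∀ i, (∀ᵐ ω ∂μ, VanishesOnCompactsAndAtInfinity b fun x c => Λ x c ω i) ∨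
      ∀ᵐ ω ∂μ, VanishesUniformly b fun x c => Λ x c ω i * g x i)
    {x : ℕ → E} (hνg : ∀ i, ∃ M, ∀ n, 1 ≤ n → weightedAverage η (fun k => g (x k) i) n ≤ M)
    (hA : Tendsto (weightedAverage η fun k => A (γ k) (x k)) atTop (𝓝 0)) :
    Tendsto (weightedAverage η fun k => Af (x k)) atTop (𝓝 0) := by
  have hγpos : Tendsto γ atTop (𝓝[>] 0) :=
    tendsto_nhdsWithin_iff.2 ⟨hγlim, (eventually_ge_atTop 1).mono fun n hn => (hγ n hn).1⟩
  have herror : (fun k => A (γ k) (x k) - Af (x k)) =o[atTop] fun k => 1 + ∑ i, g (x k) i :=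
    (isLittleO_sub_one_add_sum hb hg hΛmeas hΛ hS hΛS happrox hvanish).comp_tendsto
      (hγpos.prodMk (tendsto_top (f := x)))
  have hgsum : (fun n => ∑ k ∈ Finset.Icc 1 n, η k * ∑ i, g (x k) i) =O[atTop]
      fun n => ∑ k ∈ Finset.Icc 1 n, η k := by
    simp only [Finset.mul_sum, Finset.sum_comm (s := Finset.Icc 1 _)]
    refine IsBigO.fun_sum fun i _ => ?_
    obtain ⟨M, hM⟩ := hνg i
    exact isBigO_sum_of_weightedAverage_le hη (fun k => hg (x k) i) hηsum hM
  have hdiff := tendsto_weightedAverage_zero_of_isLittleO hη hηsum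
    (fun k => Finset.sum_nonneg fun i _ => hg (x k) i) hgsum herror
  simpa only [weightedAverage_sub, sub_sub_cancel, sub_zero] using hA.sub hdiff

end Identification

end Approximation

/-- identification step.  If `|Ã_γ f(x) − Af(x)| ≤ Λ_f(x,γ)` where
`Λ_f(x,γ) = Σ_i g_i(x) 𝔼̃[Λ̃_{f,i}(x,γ,·)]` with each coordinate satisfying condition (I)
or (II), if a.s. `sup_n ν_n(g_i) < ∞` for each `i`, and if a.s.
`(1/H_n) Σ_{k=1}^n η_k Ã_{γ_k} f(X_{k−1}) → 0`, then a.s. `ν_n(Af) → 0`. -/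
theorem stmt_3
    {E : Type*} [MeasurableSpace E] [MetricSpace E] [TopologicalSpace.SeparableSpace E]
    [LocallyCompactSpace E] [BorelSpace E]
    {Ω : Type*} {m0 : MeasurableSpace Ω} {P : Measure Ω} [IsProbabilityMeasure P]
    (ℱ : Filtration ℕ m0)
    (γbar : ℝ) (hγbar : 0 < γbar) (γ η H : ℕ → ℝ)
    (hγ : ∀ n, 1 ≤ n → γ n ∈ Set.Ioc (0 : ℝ) γbar)
    (hγlim : Tendsto γ atTop (nhds 0))
    (hΓlim : Tendsto (fun n => ∑ k ∈ Finset.Icc 1 n, γ k) atTop atTop)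
    (hη : ∀ n, 1 ≤ n → 0 ≤ η n)
    (hH : ∀ n, H n = ∑ k ∈ Finset.Icc 1 n, η k)
    (hHlim : Tendsto H atTop atTop)
    (Q : ℝ → Kernel E E) [∀ c, IsMarkovKernel (Q c)]
    (X : ℕ → Ω → E)
    (hXad : ∀ n, Measurable[ℱ n] (X n))
    (hMarkov : ∀ (n : ℕ) (f : E → ℝ), Measurable f →
      Integrable (fun ω => f (X (n + 1) ω)) P →
      P[(fun ω => f (X (n + 1) ω)) | ℱ n]
        =ᵐ[P] fun ω => ∫ y, f y ∂(Q (γ (n + 1)) (X n ω)))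
    -- the test function and its generator approximation
    (f : E → ℝ) (hfmeas : Measurable f) (Cb : ℝ) (hfb : ∀ x, |f x| ≤ Cb)
    (Af : E → ℝ) (hAfmeas : Measurable Af)
    (q : ℕ)
    (g : E → Fin q → ℝ) (hgmeas : ∀ i, Measurable (fun x => g x i))
    (hgpos : ∀ x i, 0 ≤ g x i)
    (hgloc : ∀ K : Set E, IsCompact K → ∃ C : ℝ, ∀ x ∈ K, ∀ i, g x i ≤ C)
    {Ωt : Type*} [MeasurableSpace Ωt] (Pt : Measure Ωt) [IsProbabilityMeasure Pt]
    (Λt : E → ℝ → Ωt → Fin q → ℝ)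
    (hΛmeas : ∀ i, Measurable (fun p : E × ℝ × Ωt => Λt p.1 p.2.1 p.2.2 i))
    (hΛpos : ∀ x c ωt i, 0 ≤ Λt x c ωt i)
    (S : Ωt → ℝ) (hSint : Integrable S Pt)
    (hSenv : ∀ᵐ ωt ∂Pt, ∀ (i : Fin q) (x : E), ∀ c ∈ Set.Ioc (0 : ℝ) γbar, Λt x c ωt i ≤ S ωt)
    -- |Ã_γ f − Af| ≤ Λ_f with Λ_f(x,γ) = Σ_i g_i(x) 𝔼̃[Λ̃_{f,i}(x,γ,·)]
    (happrox : ∀ c ∈ Set.Ioc (0 : ℝ) γbar, ∀ x : E,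
      |((∫ y, f y ∂(Q c x)) - f x) / c - Af x|
        ≤ ∑ i, g x i * ∫ ωt, Λt x c ωt i ∂Pt)
    -- each coordinate satisfies condition (I) or condition (II)
    (hIorII : ∀ i : Fin q,
      (∀ᵐ ωt ∂Pt,
        (∀ K : Set E, IsCompact K → ∀ ε : ℝ, 0 < ε → ∃ δ : ℝ, 0 < δ ∧
          ∀ c ∈ Set.Ioc (0 : ℝ) γbar, c < δ → ∀ x ∈ K, Λt x c ωt i ≤ ε)
        ∧ (∃ γlow : ℝ, γlow ∈ Set.Ioc (0 : ℝ) γbar ∧ ∀ ε : ℝ, 0 < ε →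
            ∃ K : Set E, IsCompact K ∧ ∀ x ∉ K,
              ∀ c ∈ Set.Ioc (0 : ℝ) γlow, Λt x c ωt i ≤ ε))
      ∨ (∀ᵐ ωt ∂Pt, ∀ ε : ℝ, 0 < ε → ∃ δ : ℝ, 0 < δ ∧
          ∀ c ∈ Set.Ioc (0 : ℝ) γbar, c < δ → ∀ x : E, Λt x c ωt i * g x i ≤ ε))
    -- a.s. boundedness of ν_n(g_i)
    (hνg : ∀ᵐ ω ∂P, ∀ i : Fin q, ∃ M : ℝ, ∀ n, 1 ≤ n →
      (H n)⁻¹ * ∑ k ∈ Finset.Icc 1 n, η k * g (X (k - 1) ω) i ≤ M)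
    -- a.s. convergence of the weighted pseudo-generator sums to 0
    (hAtil : ∀ᵐ ω ∂P, Tendsto (fun n => (H n)⁻¹ * ∑ k ∈ Finset.Icc 1 n, η k *
        (((∫ y, f y ∂(Q (γ k) (X (k - 1) ω))) - f (X (k - 1) ω)) / γ k))
      atTop (nhds 0)) :
    ∀ᵐ ω ∂P, Tendsto (fun n => (H n)⁻¹ * ∑ k ∈ Finset.Icc 1 n, η k * Af (X (k - 1) ω))
      atTop (nhds 0) := by
  obtain rfl : H = fun n => ∑ k ∈ Finset.Icc 1 n, η k := funext hH
  filter_upwards [hνg, hAtil] with ω hνgω hAω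
  exact stmt_3_general (x := fun k => X (k - 1) ω) hγbar hγ hγlim hη hHlim hgpos
    (fun x c i => ((hΛmeas i).comp
      (by fun_prop : Measurable fun ωt : Ωt => (x, c, ωt))).aestronglyMeasurable)
    hΛpos hSint hSenv happrox hIorII hνgω hAω
end

section
/- Under the abstract setting, let v_* > 0, V : E → [v_*,∞) Borel, ψ, φ : [v_*,∞) → (0,∞) Borel and locally bounded, α > 0 and β ∈ ℝ, and let (θ_n)_{n≥1} be a non-increasing sequence of positive numbers with Σ_{n≥1} θ_n γ_n < ∞. Assume the recursive control RC(ψ,φ,α,β): there is n₀ such that for every n ≥ n₀ and every x ∈ E, Ã_{γ_n}(ψ∘V)(x) ≤ (ψ(V(x))/V(x))(β − α φ(V(x))), and liminf_{y→∞} φ(y) > β/α. Assume also 𝔼[ψ(V(X_n))] < ∞ for every n. Then Σ_{n=1}^{∞} θ_n γ_n 𝔼[ Ṽ_{ψ,φ,1}(X_{n−1}) ] < +∞, where Ṽ_{ψ,φ,1}(x) := φ(V(x)) ψ(V(x)) / V(x). -/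
open MeasureTheory ProbabilityTheory Filter Set

/-!
Where `φ` is at least some `c > β / α`, the negative part of the drift absorbs `β`, at the price
of replacing `α` by `ε = α - β / c`; elsewhere `V`, and hence `ψ(V) / V`, is bounded. This gives
the Foster–Lyapunov inequality `Q (ψ ∘ V) + γ ε Ṽ ≤ ψ ∘ V + γ C`. Take its expectation along `X`,
multiply by `θ` and sum: as `θ` is non-increasing, the terms `θ 𝔼[ψ(V(X))]` telescope.
-/

open scoped ENNReal

theorem sum_range_mul_add_mul_le_of_antitone {R : Type*} [CommSemiring R] [PartialOrder R]
    [IsOrderedRing R] {w a b c : ℕ → R} (hw : Antitone w) (hw₀ : ∀ n, 0 ≤ w n)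
    (ha : ∀ n, 0 ≤ a n) (h : ∀ n, a (n + 1) + b n ≤ a n + c n) (n : ℕ) :
    ∑ i ∈ Finset.range n, w i * b i + w n * a n
      ≤ w 0 * a 0 + ∑ i ∈ Finset.range n, w i * c i := by
  induction n with
  | zero => simp
  | succ n ih =>
    calc ∑ i ∈ Finset.range (n + 1), w i * b i + w (n + 1) * a (n + 1)
        ≤ ∑ i ∈ Finset.range (n + 1), w i * b i + w n * a (n + 1) := by
          gcongr
          · exact ha _
          · exact hw n.le_succ
      _ = ∑ i ∈ Finset.range n, w i * b i + w n * (a (n + 1) + b n) := by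
          rw [Finset.sum_range_succ]; ring
      _ ≤ ∑ i ∈ Finset.range n, w i * b i + w n * (a n + c n) :=
          add_le_add le_rfl (mul_le_mul_of_nonneg_left (h n) (hw₀ n))
      _ = ∑ i ∈ Finset.range n, w i * b i + w n * a n + w n * c n := by ring
      _ ≤ w 0 * a 0 + ∑ i ∈ Finset.range n, w i * c i + w n * c n := by gcongr
      _ = w 0 * a 0 + ∑ i ∈ Finset.range (n + 1), w i * c i := by
          rw [Finset.sum_range_succ, add_assoc]

theorem tsum_mul_le_of_antitone {w a b c : ℕ → ℝ≥0∞} (hw : Antitone w)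
    (h : ∀ n, a (n + 1) + b n ≤ a n + c n) :
    ∑' n, w n * b n ≤ w 0 * a 0 + ∑' n, w n * c n :=
  ENNReal.tsum_le_of_sum_range_le fun n =>
    calc ∑ i ∈ Finset.range n, w i * b i
        ≤ ∑ i ∈ Finset.range n, w i * b i + w n * a n := le_self_add
      _ ≤ w 0 * a 0 + ∑ i ∈ Finset.range n, w i * c i :=
          sum_range_mul_add_mul_le_of_antitone hw (fun _ => zero_le) (fun _ => zero_le) h n
      _ ≤ w 0 * a 0 + ∑' n, w n * c n := by gcongr; exact ENNReal.sum_le_tsum _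

theorem tsum_mul_lt_top_of_antitone {w a b c : ℕ → ℝ≥0∞} (hw : Antitone w)
    (hw_top : ∀ n, w n ≠ ∞) (ha_top : ∀ n, a n ≠ ∞) (hb_top : ∀ n, b n ≠ ∞)
    (hc : ∑' n, w n * c n ≠ ∞) (h : ∀ᶠ n in atTop, a (n + 1) + b n ≤ a n + c n) :
    ∑' n, w n * b n < ∞ := by
  obtain ⟨N, hN⟩ := eventually_atTop.1 h
  have tail : ∑' n, w (n + N) * b (n + N)
      ≤ w N * a N + ∑' n, w (n + N) * c (n + N) := by
    simpa only [zero_add] using tsum_mul_le_of_antitone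
      (w := fun n => w (n + N)) (a := fun n => a (n + N)) (b := fun n => b (n + N))
      (c := fun n => c (n + N)) (fun _ _ hmn => hw (by gcongr))
      fun n => by simpa only [add_right_comm] using hN (n + N) (N.le_add_left n)
  have tail_c : ∑' n, w (n + N) * c (n + N) ≤ ∑' n, w n * c n :=
    ENNReal.tsum_comp_le_tsum_of_injective (add_left_injective N) fun n => w n * c n
  rw [← ENNReal.summable.sum_add_tsum_nat_add' (k := N)]
  refine ENNReal.add_lt_top.2 ⟨ENNReal.sum_lt_top.2 fun n _ =>
    ENNReal.mul_lt_top (hw_top n).lt_top (hb_top n).lt_top, tail.trans_lt ?_⟩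
  exact ENNReal.add_lt_top.2
    ⟨ENNReal.mul_lt_top (hw_top N).lt_top (ha_top N).lt_top, tail_c.trans_lt hc.lt_top⟩

theorem exists_mul_sub_le_sub_mul {v α β : ℝ} (hα : 0 < α) {g φ : ℝ → ℝ}
    (hg : ∀ y, v ≤ y → 0 ≤ g y) (hφ : ∀ y, v ≤ y → 0 ≤ φ y)
    (hg_loc : ∀ M, ∃ K, ∀ y ∈ Icc v M, g y ≤ K)
    (hliminf : ∃ c, β / α < c ∧ ∀ᶠ y in atTop, c ≤ φ y) :
    ∃ C ε : ℝ, 0 ≤ C ∧ 0 < ε ∧ ∀ y, v ≤ y → g y * (β - α * φ y) ≤ C - ε * (g y * φ y) := by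
  rcases le_total β 0 with hβ | hβ
  · exact ⟨0, α, le_rfl, hα, fun y hy => by linarith [mul_nonpos_of_nonneg_of_nonpos (hg y hy) hβ]⟩
  obtain ⟨c, hc, hφ_ge⟩ := hliminf
  obtain ⟨M, hM⟩ := eventually_atTop.1 hφ_ge
  obtain ⟨K, hK⟩ := hg_loc M
  have hc₀ : 0 < c := (div_nonneg hβ hα.le).trans_lt hc
  have hβc : β / c < α := (div_lt_comm₀ hα hc₀).1 hc
  refine ⟨|K| * β, α - β / c, by positivity, sub_pos.2 hβc, fun y hy => ?_⟩
  have hgy := hg y hy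
  have hφy := hφ y hy
  suffices g y * β ≤ |K| * β + β / c * (g y * φ y) by linarith
  rcases le_total M y with hMy | hyM
  · calc g y * β = β / c * (g y * c) := by field_simp
      _ ≤ β / c * (g y * φ y) := by gcongr; exact hM y hMy
      _ ≤ |K| * β + β / c * (g y * φ y) := le_add_of_nonneg_left (by positivity)
  · calc g y * β ≤ |K| * β := by gcongr; exact (hK y ⟨hy, hyM⟩).trans (le_abs_self K)
      _ ≤ |K| * β + β / c * (g y * φ y) := le_add_of_nonneg_right (by positivity)

theorem ofReal_add_ofReal_mul_le_of_div_le {p u w γ ε C : ℝ} (hp : 0 ≤ p) (hu : 0 ≤ u) (hw : 0 ≤ w)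
    (hγ : 0 < γ) (hε : 0 ≤ ε) (hC : 0 ≤ C) (h : (p - u) / γ ≤ C - ε * w) :
    ENNReal.ofReal p + ENNReal.ofReal γ * (ENNReal.ofReal ε * ENNReal.ofReal w)
      ≤ ENNReal.ofReal u + ENNReal.ofReal γ * ENNReal.ofReal C := by
  rw [← ENNReal.ofReal_mul hε, ← ENNReal.ofReal_mul hγ.le, ← ENNReal.ofReal_mul hγ.le,
    ← ENNReal.ofReal_add hp (by positivity), ← ENNReal.ofReal_add hu (by positivity)]
  rw [div_le_iff₀ hγ] at h
  exact ENNReal.ofReal_le_ofReal (by linarith)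

section

variable {E Ω : Type*} [MeasurableSpace E] {m m0 : MeasurableSpace Ω} {P : Measure Ω}

theorem lintegral_add_lintegral_le_of_add_le_add_const {f g u : Ω → ℝ≥0∞} {c : ℝ≥0∞}
    (h : ∀ ω, f ω + g ω ≤ u ω + c) :
    ∫⁻ ω, f ω ∂P + ∫⁻ ω, g ω ∂P ≤ ∫⁻ ω, u ω ∂P + c * P univ :=
  calc ∫⁻ ω, f ω ∂P + ∫⁻ ω, g ω ∂P
      ≤ ∫⁻ ω, f ω + g ω ∂P := le_lintegral_add f g
    _ ≤ ∫⁻ ω, u ω + c ∂P := lintegral_mono h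
    _ = ∫⁻ ω, u ω ∂P + c * P univ := by
        rw [lintegral_add_right _ measurable_const, lintegral_const]

theorem lintegral_ofReal_eq_of_condExp_eq_integral (hm : m ≤ m0) [SigmaFinite (P.trim hm)]
    {Y : Ω → ℝ} (hY : Integrable Y P) (hY₀ : 0 ≤ᵐ[P] Y)
    {κ : Ω → Measure E} {f : E → ℝ} (hf : ∀ ω, Integrable f (κ ω)) (hf₀ : ∀ x, 0 ≤ f x)
    (h : P[Y | m] =ᵐ[P] fun ω => ∫ x, f x ∂κ ω) :
    ∫⁻ ω, ENNReal.ofReal (Y ω) ∂P = ∫⁻ ω, ∫⁻ x, ENNReal.ofReal (f x) ∂κ ω ∂P := by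
  have integral_eq : ∫ ω, Y ω ∂P = ∫ ω, ∫ x, f x ∂κ ω ∂P := by
    rw [← integral_condExp hm, integral_congr_ae h]
  rw [← ofReal_integral_eq_lintegral_ofReal hY hY₀, integral_eq,
    ofReal_integral_eq_lintegral_ofReal (integrable_condExp.congr h)
      (ae_of_all _ fun ω => integral_nonneg hf₀)]
  exact lintegral_congr fun ω =>
    ofReal_integral_eq_lintegral_ofReal (hf ω) (ae_of_all _ hf₀)

theorem tsum_mul_lintegral_lt_top_of_drift [IsFiniteMeasure P]
    {κ : ℕ → Kernel E E} {X : ℕ → Ω → E} {U W : E → ℝ≥0∞} {θ γ : ℕ → ℝ≥0∞} {ε C : ℝ≥0∞}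
    (hX : ∀ n, ∫⁻ ω, U (X (n + 1) ω) ∂P = ∫⁻ ω, ∫⁻ y, U y ∂κ n (X n ω) ∂P)
    (hU : ∀ n, ∫⁻ ω, U (X n ω) ∂P ≠ ∞)
    (hθ : Antitone θ) (hθ_top : ∀ n, θ n ≠ ∞) (hγ : ∀ n, γ n ≠ 0) (hγ_top : ∀ n, γ n ≠ ∞)
    (hθγ : ∑' n, θ n * γ n ≠ ∞) (hε : ε ≠ 0) (hε_top : ε ≠ ∞) (hC : C ≠ ∞)
    (hdrift : ∀ᶠ n in atTop, ∀ x, ∫⁻ y, U y ∂κ n x + γ n * (ε * W x) ≤ U x + γ n * C) :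
    ∑' n, θ n * γ n * ∫⁻ ω, W (X n ω) ∂P < ∞ := by
  have lintegral_mul : ∀ n k, ∫⁻ ω, γ n * (ε * W (X k ω)) ∂P
      = γ n * (ε * ∫⁻ ω, W (X k ω) ∂P) := fun n k => by
    rw [lintegral_const_mul' _ _ (hγ_top n), lintegral_const_mul' _ _ hε_top]
  -- The drift inequality at one `n` bounds `W` by `U` on all of `E`, so also at early times `k`.
  have hW : ∀ k, ∫⁻ ω, W (X k ω) ∂P ≠ ∞ := by
    intro k
    obtain ⟨n, hn⟩ := hdrift.exists
    have hle := lintegral_add_lintegral_le_of_add_le_add_const (P := P) fun ω => hn (X k ω)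
    rw [lintegral_mul] at hle
    have hfin : γ n * (ε * ∫⁻ ω, W (X k ω) ∂P) ≠ ∞ :=
      ne_top_of_le_ne_top (by finiteness [hU k, hγ_top n]) (le_add_self.trans hle)
    exact (ENNReal.lt_top_of_mul_ne_top_right
      (ENNReal.lt_top_of_mul_ne_top_right hfin (hγ n)).ne hε).ne
  have hsum : ∑' n, θ n * (γ n * (ε * ∫⁻ ω, W (X n ω) ∂P)) < ∞ := by
    refine tsum_mul_lt_top_of_antitone (a := fun n => ∫⁻ ω, U (X n ω) ∂P)
      (c := fun n => γ n * C * P univ) hθ hθ_top hU (fun n => by finiteness [hW n, hγ_top n]) ?_ ?_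
    · simp_rw [mul_assoc, ← mul_assoc (θ _), ENNReal.tsum_mul_right]
      finiteness
    · filter_upwards [hdrift] with n hn
      rw [hX, ← lintegral_mul]
      exact lintegral_add_lintegral_le_of_add_le_add_const fun ω => hn (X n ω)
  have hfactor : ∑' n, θ n * (γ n * (ε * ∫⁻ ω, W (X n ω) ∂P))
      = ε * ∑' n, θ n * γ n * ∫⁻ ω, W (X n ω) ∂P := by
    rw [← ENNReal.tsum_mul_left]
    exact tsum_congr fun n => by ring
  exact ENNReal.lt_top_of_mul_ne_top_right (hfactor ▸ hsum.ne) hε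

theorem stmt_6_general [IsFiniteMeasure P] (ℱ : Filtration ℕ m0)
    {γ θ : ℕ → ℝ} (hγ : ∀ n, 0 < γ n) (hθ : Antitone θ) (hθγ : Summable fun n => θ n * γ n)
    {κ : ℕ → Kernel E E} {X : ℕ → Ω → E} {vstar α β : ℝ} (hv : 0 < vstar) (hα : 0 < α)
    {V : E → ℝ} (hV : ∀ x, vstar ≤ V x) {ψ φ : ℝ → ℝ}
    (hψ : ∀ y, vstar ≤ y → 0 ≤ ψ y) (hφ : ∀ y, vstar ≤ y → 0 ≤ φ y)
    (hψ_loc : ∀ M, ∃ K, ∀ y ∈ Icc vstar M, ψ y ≤ K)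
    (hκ : ∀ n x, Integrable (fun y => ψ (V y)) (κ n x))
    (hMarkov : ∀ n, P[fun ω => ψ (V (X (n + 1) ω)) | ℱ n]
      =ᵐ[P] fun ω => ∫ y, ψ (V y) ∂κ n (X n ω))
    (hRC : ∀ᶠ n in atTop, ∀ x, ((∫ y, ψ (V y) ∂κ n x) - ψ (V x)) / γ n
      ≤ ψ (V x) / V x * (β - α * φ (V x)))
    (hliminf : ∃ c, β / α < c ∧ ∀ᶠ y in atTop, c ≤ φ y)
    (hint : ∀ n, Integrable (fun ω => ψ (V (X n ω))) P) :
    ∑' n, ENNReal.ofReal (θ n * γ n) *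
      ∫⁻ ω, ENNReal.ofReal (φ (V (X n ω)) * ψ (V (X n ω)) / V (X n ω)) ∂P < ∞ := by
  have hψ_div : ∀ y, vstar ≤ y → 0 ≤ ψ y / y := fun y hy =>
    div_nonneg (hψ y hy) (hv.le.trans hy)
  have hψ_div_loc : ∀ M, ∃ K, ∀ y ∈ Icc vstar M, ψ y / y ≤ K := fun M =>
    (hψ_loc M).imp' (|·| / vstar) fun K hK y hy =>
      div_le_div₀ (abs_nonneg K) ((hK y hy).trans (le_abs_self K)) hv hy.1
  obtain ⟨C, ε, hC, hε, hdrift⟩ := exists_mul_sub_le_sub_mul hα hψ_div hφ hψ_div_loc hliminf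
  have hψV : ∀ x, 0 ≤ ψ (V x) := fun x => hψ _ (hV x)
  have ofReal_θγ : ∀ n, ENNReal.ofReal (θ n * γ n) = ENNReal.ofReal (θ n) * ENNReal.ofReal (γ n) :=
    fun n => ENNReal.ofReal_mul' (hγ n).le
  simp only [ofReal_θγ]
  refine tsum_mul_lintegral_lt_top_of_drift (κ := κ)
    (U := fun x => ENNReal.ofReal (ψ (V x)))
    (W := fun x => ENNReal.ofReal (φ (V x) * ψ (V x) / V x))
    (ε := ENNReal.ofReal ε) (C := ENNReal.ofReal C)
    (fun n => lintegral_ofReal_eq_of_condExp_eq_integral (ℱ.le n) (hint (n + 1))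
      (ae_of_all _ fun ω => hψV _) (fun ω => hκ n (X n ω)) hψV (hMarkov n))
    (fun n => (hint n).lintegral_lt_top.ne) (fun _ _ hmn => ENNReal.ofReal_le_ofReal (hθ hmn))
    (fun n => ENNReal.ofReal_ne_top) (fun n => (ENNReal.ofReal_pos.2 (hγ n)).ne')
    (fun n => ENNReal.ofReal_ne_top) ?_ (ENNReal.ofReal_pos.2 hε).ne'
    ENNReal.ofReal_ne_top ENNReal.ofReal_ne_top ?_
  · simpa only [ofReal_θγ] using hθγ.tsum_ofReal_ne_top
  · filter_upwards [hRC] with n hn x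
    have hle := (hn x).trans (hdrift _ (hV x))
    rw [div_mul_eq_mul_div, mul_comm (ψ (V x))] at hle
    rw [← ofReal_integral_eq_lintegral_ofReal (hκ n x) (ae_of_all _ hψV)]
    refine ofReal_add_ofReal_mul_le_of_div_le (integral_nonneg hψV) (hψV x) ?_ (hγ n) hε.le hC hle
    exact div_nonneg (mul_nonneg (hφ _ (hV x)) (hψV x)) (hv.le.trans (hV x))

end

/-- under the abstract setting, the recursive control `RC(ψ,φ,α,β)` together
with `𝔼[ψ(V(X_n))] < ∞` for every `n` and a non-increasing positive sequence `(θ_n)` with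
`Σ θ_n γ_n < ∞` implies `Σ_{n≥1} θ_n γ_n 𝔼[Ṽ_{ψ,φ,1}(X_{n−1})] < ∞` where
`Ṽ_{ψ,φ,1} = (φ∘V)(ψ∘V)/V` (the expectations of the nonnegative `Ṽ` are in `[0,∞]`). -/
theorem stmt_6
    {E : Type*} [MeasurableSpace E] [MetricSpace E] [TopologicalSpace.SeparableSpace E]
    [LocallyCompactSpace E] [BorelSpace E]
    {Ω : Type*} {m0 : MeasurableSpace Ω} {P : Measure Ω} [IsProbabilityMeasure P]
    (ℱ : Filtration ℕ m0)
    (γbar : ℝ) (hγbar : 0 < γbar) (γ : ℕ → ℝ)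
    (hγ : ∀ n, 1 ≤ n → γ n ∈ Set.Ioc (0 : ℝ) γbar)
    (hγlim : Tendsto γ atTop (nhds 0))
    (hΓlim : Tendsto (fun n => ∑ k ∈ Finset.Icc 1 n, γ k) atTop atTop)
    (Q : ℝ → Kernel E E) [∀ c, IsMarkovKernel (Q c)]
    (X : ℕ → Ω → E)
    (hXad : ∀ n, Measurable[ℱ n] (X n))
    (hMarkov : ∀ (n : ℕ) (f : E → ℝ), Measurable f →
      Integrable (fun ω => f (X (n + 1) ω)) P →
      P[(fun ω => f (X (n + 1) ω)) | ℱ n]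
        =ᵐ[P] fun ω => ∫ y, f y ∂(Q (γ (n + 1)) (X n ω)))
    -- data of the statement
    (vstar α β : ℝ) (hv : 0 < vstar) (hα : 0 < α)
    (V : E → ℝ) (hVmeas : Measurable V) (hVlb : ∀ x, vstar ≤ V x)
    (ψ φ : ℝ → ℝ) (hψmeas : Measurable ψ) (hφmeas : Measurable φ)
    (hψpos : ∀ y, vstar ≤ y → 0 < ψ y) (hφpos : ∀ y, vstar ≤ y → 0 < φ y)
    (hψloc : ∀ M, ∃ Cloc, ∀ y ∈ Set.Icc vstar M, ψ y ≤ Cloc)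
    (hφloc : ∀ M, ∃ Cloc, ∀ y ∈ Set.Icc vstar M, φ y ≤ Cloc)
    (θ : ℕ → ℝ) (hθpos : ∀ n, 1 ≤ n → 0 < θ n)
    (hθmono : ∀ n, 1 ≤ n → θ (n + 1) ≤ θ n)
    (hθγ : Summable (fun n : ℕ => θ (n + 1) * γ (n + 1)))
    (hQint : ∀ c ∈ Set.Ioc (0 : ℝ) γbar, ∀ x : E,
      Integrable (fun y => ψ (V y)) (Q c x))
    -- recursive control RC(ψ,φ,α,β)
    (n₀ : ℕ) (hRC : ∀ n, n₀ ≤ n → 1 ≤ n → ∀ x : E,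
      ((∫ y, ψ (V y) ∂(Q (γ n) x)) - ψ (V x)) / γ n
        ≤ (ψ (V x) / V x) * (β - α * φ (V x)))
    (hliminf : ∃ c : ℝ, β / α < c ∧ ∀ᶠ y in atTop, c ≤ φ y)
    (hint : ∀ n, Integrable (fun ω => ψ (V (X n ω))) P) :
    (∑' n : ℕ, ENNReal.ofReal (θ (n + 1) * γ (n + 1)) *
        ∫⁻ ω, ENNReal.ofReal (φ (V (X n ω)) * ψ (V (X n ω)) / V (X n ω)) ∂P) < ⊤ :=
  stmt_6_general ℱ (fun n => (hγ (n + 1) n.succ_pos).1)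
    (antitone_nat_of_succ_le fun n => hθmono (n + 1) n.succ_pos) hθγ
    (κ := fun n => Q (γ (n + 1))) hv hα hVlb (fun y hy => (hψpos y hy).le)
    (fun y hy => (hφpos y hy).le) hψloc (fun n => hQint _ (hγ (n + 1) n.succ_pos))
    (fun n => hMarkov n _ (hψmeas.comp hVmeas) (hint (n + 1)))
    (eventually_atTop.2 ⟨n₀, fun n hn => hRC (n + 1) (hn.trans n.le_succ) n.succ_pos⟩) hliminf hint
end

section
/- Let d ∈ ℕ*, let Λ be a real d×d matrix, and let U be a standard Gaussian random vector on ℝ^d (independent N(0,1) coordinates). Set Σ := I_d − 2ΛᵀΛ and assume Σ is positive definite. Then for every h ∈ (0,1) and every v ∈ ℝ^d, 𝔼[ exp( √h ⟨v,U⟩ + h |ΛU|² ) ] ≤ exp( (h/(2(1−h))) |v|² ) · (det Σ)^{−h/2}. -/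
open MeasureTheory ProbabilityTheory Matrix

/-!
Hölder's inequality with exponents `1 / (1 - h)` and `1 / h` separates the linear from the
quadratic part of the exponent. The linear part is a Gaussian moment generating function. Since
`|Λx|² = (|x|² - ⟨x, Σx⟩) / 2`, the quadratic part splits, by rotation invariance of the Gaussian
measure, into one-dimensional integrals, one for each eigenvalue of `Σ`.
-/

section Holder

variable {α : Type*} [MeasurableSpace α] {μ : Measure α} {f g : α → ℝ} {a b : ℝ}

lemma memLp_exp_mul_of_integrable_exp (ha : 0 < a) (hf : Integrable (fun x ↦ Real.exp (f x)) μ) :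
    MemLp (fun x ↦ Real.exp (a * f x)) (ENNReal.ofReal a⁻¹) μ := by
  have hpow := (memLp_one_iff_integrable.2 hf).norm_rpow_div (ENNReal.ofReal a)
  simpa only [ENNReal.toReal_ofReal ha.le, Real.norm_eq_abs, Real.abs_exp, ← Real.exp_mul,
    mul_comm _ a, one_div, ← ENNReal.ofReal_inv_of_pos ha] using hpow

lemma integral_exp_convexComb_le (ha : 0 < a) (hb : 0 < b) (hab : a + b = 1)
    (hf : Integrable (fun x ↦ Real.exp (f x)) μ) (hg : Integrable (fun x ↦ Real.exp (g x)) μ) :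
    ∫ x, Real.exp (a * f x + b * g x) ∂μ
      ≤ (∫ x, Real.exp (f x) ∂μ) ^ a * (∫ x, Real.exp (g x) ∂μ) ^ b := by
  have exp_mul_rpow_inv {c : ℝ} (hc : 0 < c) (t : ℝ) : Real.exp (c * t) ^ c⁻¹ = Real.exp t := by
    rw [← Real.exp_mul, mul_right_comm, mul_inv_cancel₀ hc.ne', one_mul]
  have holder := integral_mul_le_Lp_mul_Lq_of_nonneg (Real.HolderConjugate.inv_inv ha hb hab)
    (ae_of_all μ fun x ↦ (Real.exp_pos (a * f x)).le)
    (ae_of_all μ fun x ↦ (Real.exp_pos (b * g x)).le)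
    (memLp_exp_mul_of_integrable_exp ha hf) (memLp_exp_mul_of_integrable_exp hb hg)
  simpa only [exp_mul_rpow_inv ha, exp_mul_rpow_inv hb, one_div, inv_inv, ← Real.exp_add]
    using holder

end Holder

section QuadraticForm

variable {R m n : Type*} [CommRing R] [Fintype m] [Fintype n] [DecidableEq n]

lemma mulVec_dotProduct_mulVec_of_transpose_mul_self {Q : Matrix m n R} (hQ : Qᵀ * Q = 1)
    (x y : n → R) : Q *ᵥ x ⬝ᵥ Q *ᵥ y = x ⬝ᵥ y := by
  rw [dotProduct_mulVec, vecMul_mulVec, ← dotProduct_mulVec, hQ, one_mulVec]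

lemma two_mul_mulVec_dotProduct_mulVec (Λ : Matrix m n R) (x : n → R) :
    2 * (Λ *ᵥ x ⬝ᵥ Λ *ᵥ x) = x ⬝ᵥ x - x ⬝ᵥ (1 - (2 : R) • (Λᵀ * Λ)) *ᵥ x := by
  rw [sub_mulVec, one_mulVec, smul_mulVec, dotProduct_sub, dotProduct_smul, ← mulVec_mulVec,
    dotProduct_mulVec x, vecMul_transpose, smul_eq_mul, sub_sub_cancel]

lemma eigenvectorUnitary_mulVec_dotProduct_mulVec {S : Matrix n n ℝ} (hS : S.IsHermitian)
    (y : n → ℝ) :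
    (hS.eigenvectorUnitary *ᵥ y : n → ℝ) ⬝ᵥ S *ᵥ hS.eigenvectorUnitary *ᵥ y
      = ∑ i, hS.eigenvalues i * y i ^ 2 := by
  have diagonalize : (hS.eigenvectorUnitary : Matrix n n ℝ)ᵀ * S * hS.eigenvectorUnitary
      = diagonal hS.eigenvalues := by
    simpa [star_eq_conjTranspose, conjTranspose_eq_transpose_of_trivial] using
      hS.conjStarAlgAut_star_eigenvectorUnitary
  rw [dotProduct_mulVec, vecMul_mulVec, dotProduct_mulVec, vecMul_vecMul, ← dotProduct_mulVec,
    diagonalize]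
  simp only [dotProduct, mulVec_diagonal]
  exact Finset.sum_congr rfl fun i _ ↦ by ring

end QuadraticForm

lemma integral_exp_mul_sq_gaussianReal {v : NNReal} {c : ℝ} (hc : 2 * v * c < 1) :
    ∫ x, Real.exp (c * x ^ 2) ∂(gaussianReal 0 v) = (1 - 2 * v * c) ^ (-(1 : ℝ) / 2) := by
  rcases eq_or_ne v 0 with rfl | hv
  · simp
  have one_sub_pos : 0 < 1 - 2 * v * c := by linarith
  have density_mul_exp (x : ℝ) : gaussianPDFReal 0 v x • Real.exp (c * x ^ 2)
      = (√(2 * Real.pi * v))⁻¹ * Real.exp (-((1 - 2 * v * c) / (2 * v)) * x ^ 2) := by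
    rw [gaussianPDFReal, smul_eq_mul, mul_assoc, ← Real.exp_add]
    congr 2
    field_simp
    ring
  simp_rw [integral_gaussianReal_eq_integral_smul hv, density_mul_exp]
  rw [integral_const_mul, integral_gaussian, ← Real.sqrt_inv, ← Real.sqrt_mul (by positivity),
    neg_div, Real.rpow_neg one_sub_pos.le, ← Real.sqrt_eq_rpow, ← Real.sqrt_inv]
  congr 1
  field_simp

section StandardGaussian

variable {ι : Type*} [Fintype ι]

lemma integral_exp_dotProduct_pi_gaussianReal (w : ι → ℝ) :
    ∫ x, Real.exp (w ⬝ᵥ x) ∂(Measure.pi fun _ : ι ↦ gaussianReal 0 1)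
      = Real.exp (w ⬝ᵥ w / 2) := by
  have mgf_coord (i : ι) :
      ∫ t, Real.exp (w i * t) ∂(gaussianReal 0 1) = Real.exp (w i * w i / 2) := by
    simpa [mgf, sq] using congrFun (mgf_id_gaussianReal (μ := 0) (v := 1)) (w i)
  simp_rw [dotProduct, Finset.sum_div, Real.exp_sum]
  rw [integral_fintype_prod_eq_prod (f := fun i t ↦ Real.exp (w i * t))]
  simp_rw [mgf_coord]

variable [DecidableEq ι]

lemma measurePreserving_mulVec_pi_gaussianReal (Q : unitaryGroup ι ℝ) :
    MeasurePreserving ((Q : Matrix ι ι ℝ) *ᵥ ·)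
      (Measure.pi fun _ : ι ↦ gaussianReal 0 1) (Measure.pi fun _ : ι ↦ gaussianReal 0 1) := by
  let rotation : EuclideanSpace ℝ ι ≃ₗᵢ[ℝ] EuclideanSpace ℝ ι :=
    Unitary.linearIsometryEquiv ⟨toEuclideanCLM (𝕜 := ℝ) (Q : Matrix ι ι ℝ), Unitary.map_mem _ Q.2⟩
  have toLp_preserving : MeasurePreserving (MeasurableEquiv.toLp 2 (ι → ℝ))
      (Measure.pi fun _ : ι ↦ gaussianReal 0 1) (stdGaussian (EuclideanSpace ℝ ι)) :=
    ⟨by fun_prop, map_pi_eq_stdGaussian⟩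
  have rotation_preserving : MeasurePreserving rotation
      (stdGaussian (EuclideanSpace ℝ ι)) (stdGaussian (EuclideanSpace ℝ ι)) :=
    ⟨by fun_prop, stdGaussian_map rotation⟩
  exact (toLp_preserving.symm _).comp (rotation_preserving.comp toLp_preserving)

lemma integral_exp_quadratic_pi_gaussianReal {S : Matrix ι ι ℝ} (hS : S.PosDef) :
    ∫ x, Real.exp ((x ⬝ᵥ x - x ⬝ᵥ S *ᵥ x) / 2) ∂(Measure.pi fun _ : ι ↦ gaussianReal 0 1)
      = S.det ^ (-(1 : ℝ) / 2) := by
  have hH := hS.isHermitian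
  have orthogonal : (hH.eigenvectorUnitary : Matrix ι ι ℝ)ᵀ * hH.eigenvectorUnitary = 1 :=
    Unitary.coe_star_mul_self hH.eigenvectorUnitary
  have exponent_eq (y : ι → ℝ) :
      Real.exp (((hH.eigenvectorUnitary *ᵥ y : ι → ℝ) ⬝ᵥ hH.eigenvectorUnitary *ᵥ y
        - (hH.eigenvectorUnitary *ᵥ y : ι → ℝ) ⬝ᵥ S *ᵥ hH.eigenvectorUnitary *ᵥ y) / 2)
        = ∏ i, Real.exp ((1 - hH.eigenvalues i) / 2 * y i ^ 2) := by
    rw [eigenvectorUnitary_mulVec_dotProduct_mulVec,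
      mulVec_dotProduct_mulVec_of_transpose_mul_self orthogonal, dotProduct,
      ← Finset.sum_sub_distrib, Finset.sum_div, Real.exp_sum]
    congr! 2
    ring
  have integral_coord (i : ι) :
      ∫ t, Real.exp ((1 - hH.eigenvalues i) / 2 * t ^ 2) ∂(gaussianReal 0 1)
        = hH.eigenvalues i ^ (-(1 : ℝ) / 2) := by
    have eigenvalue_pos := hS.eigenvalues_pos i
    rw [integral_exp_mul_sq_gaussianReal (by rw [NNReal.coe_one]; linarith), NNReal.coe_one]
    congr 1
    ring
  rw [← (measurePreserving_mulVec_pi_gaussianReal hH.eigenvectorUnitary).map_eq, integral_map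
    (by fun_prop) (Continuous.aestronglyMeasurable (by fun_prop))]
  simp_rw [exponent_eq]
  rw [integral_fintype_prod_eq_prod (f := fun i t ↦ Real.exp ((1 - hH.eigenvalues i) / 2 * t ^ 2)),
    hH.det_eq_prod_eigenvalues]
  simp_rw [integral_coord]
  simpa using Real.finsetProd_rpow Finset.univ _ (fun i _ ↦ (hS.eigenvalues_pos i).le) (-1 / 2)

end StandardGaussian

theorem stmt_9_general {ι Ω : Type*} [Fintype ι] [DecidableEq ι] [MeasurableSpace Ω]
    {P : Measure Ω} {U : Ω → ι → ℝ}
    (hU : HasLaw U (Measure.pi fun _ : ι ↦ gaussianReal 0 1) P)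
    {S : Matrix ι ι ℝ} (hS : S.PosDef) {h : ℝ} (hh : h ∈ Set.Ioo (0 : ℝ) 1) (v : ι → ℝ) :
    ∫ ω, Real.exp (√h * (v ⬝ᵥ U ω) + h * ((U ω ⬝ᵥ U ω - U ω ⬝ᵥ S *ᵥ U ω) / 2)) ∂P
      ≤ Real.exp (h / (2 * (1 - h)) * (v ⬝ᵥ v)) * S.det ^ (-h / 2) := by
  obtain ⟨h_pos, h_lt_one⟩ := hh
  have one_sub_pos : 0 < 1 - h := sub_pos.2 h_lt_one
  set w : ι → ℝ := (√h / (1 - h)) • v with hw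
  have linear_eq := integral_exp_dotProduct_pi_gaussianReal w
  have quadratic_eq := integral_exp_quadratic_pi_gaussianReal hS
  have det_pos := hS.det_pos
  calc ∫ ω, Real.exp (√h * (v ⬝ᵥ U ω) + h * ((U ω ⬝ᵥ U ω - U ω ⬝ᵥ S *ᵥ U ω) / 2)) ∂P
      = ∫ x, Real.exp ((1 - h) * (w ⬝ᵥ x) + h * ((x ⬝ᵥ x - x ⬝ᵥ S *ᵥ x) / 2))
          ∂(Measure.pi fun _ : ι ↦ gaussianReal 0 1) := by
        rw [← hU.integral_comp (Continuous.aestronglyMeasurable (by fun_prop))]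
        simp only [Function.comp_def, hw, smul_dotProduct, smul_eq_mul, ← mul_assoc,
          mul_div_cancel₀ _ one_sub_pos.ne']
    _ ≤ Real.exp (w ⬝ᵥ w / 2) ^ (1 - h) * (S.det ^ (-(1 : ℝ) / 2)) ^ h := by
        rw [← linear_eq, ← quadratic_eq]
        exact integral_exp_convexComb_le one_sub_pos h_pos (sub_add_cancel 1 h)
          (.of_integral_ne_zero (by rw [linear_eq]; positivity))
          (.of_integral_ne_zero (by rw [quadratic_eq]; positivity))
    _ = Real.exp (h / (2 * (1 - h)) * (v ⬝ᵥ v)) * S.det ^ (-h / 2) := by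
        rw [← Real.exp_mul, ← Real.rpow_mul det_pos.le]
        simp only [hw, smul_dotProduct, dotProduct_smul, smul_eq_mul]
        congr 2
        · field_simp
          rw [Real.sq_sqrt h_pos.le]
        · ring

/-- If `Λ` is a real `d×d` matrix, `U` a standard Gaussian random vector on
`ℝ^d` (independent `N(0,1)` coordinates), and `Σ := I_d − 2ΛᵀΛ` is positive definite, then
for every `h ∈ (0,1)` and every `v ∈ ℝ^d`,
`𝔼[exp(√h ⟨v,U⟩ + h |ΛU|²)] ≤ exp((h/(2(1−h))) |v|²) (det Σ)^{−h/2}`. -/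
theorem stmt_9 (d : ℕ) (hd : 0 < d)
    {Ω : Type*} [MeasurableSpace Ω] (P : Measure Ω) [IsProbabilityMeasure P]
    (U : Ω → (Fin d → ℝ)) (hUmeas : Measurable U)
    (hUlaw : Measure.map U P = Measure.pi (fun _ : Fin d => gaussianReal 0 1))
    (Λ : Matrix (Fin d) (Fin d) ℝ)
    (hpos : (1 - (2 : ℝ) • (Λᵀ * Λ)).PosDef)
    (h : ℝ) (hh : h ∈ Set.Ioo (0 : ℝ) 1) (v : Fin d → ℝ) :
    ∫ ω, Real.exp (Real.sqrt h * (∑ i, v i * U ω i) + h * ∑ i, (Λ.mulVec (U ω) i) ^ 2) ∂P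
      ≤ Real.exp ((h / (2 * (1 - h))) * ∑ i, (v i) ^ 2)
        * ((1 - (2 : ℝ) • (Λᵀ * Λ)).det) ^ (-h / 2) := by
  have bound := stmt_9_general ⟨hUmeas.aemeasurable, hUlaw⟩ hpos hh v
  simp_rw [← two_mul_mulVec_dotProduct_mulVec, mul_div_cancel_left₀ _ (two_ne_zero' ℝ)] at bound
  simpa only [dotProduct, ← sq] using bound
end

section
/- Let E be a measurable space, Q a Markov transition kernel on E, γ > 0, s ≥ 1, v_* > 0, V : E → [v_*,∞) Borel, ψ, φ : [v_*,∞) → (0,∞) Borel, α > 0 and β ∈ ℝ. Assume that for every x ∈ E, Q(ψ∘V)(x) ≤ ψ(V(x)) + γ (ψ(V(x))/V(x)) (β − α φ(V(x))). Then for every x ∈ E, Q((ψ∘V)^{1/s})(x) ≤ (ψ(V(x)))^{1/s} ( 1 + (γ/(s V(x))) (β − α φ(V(x))) ); equivalently, with Ã_γ f := (Q f − f)/γ, Ã_γ((ψ∘V)^{1/s})(x) ≤ ( (ψ(V(x)))^{1/s} / (s V(x)) ) ( β − α φ(V(x)) ). -/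
open MeasureTheory ProbabilityTheory

/-!
Jensen's inequality for the concave power `u ↦ u ^ p`, `0 ≤ p ≤ 1`, is Hölder's inequality against
the constant `1`. It turns a bound `a * (1 + t)` on the mean of `f` into the bound
`(a * (1 + t)) ^ p` on the mean of `f ^ p`, and Bernoulli's inequality `(1 + t) ^ p ≤ 1 + p * t`
divides the relative drift `t` by `s = 1 / p`. Bernoulli requires `-1 ≤ t`, which holds because the
mean of a positive function is positive.
-/

open scoped ENNReal

section Measure

variable {Ω : Type*} [MeasurableSpace Ω] {μ : Measure Ω}

theorem lintegral_rpow_le_rpow_lintegral_mul_measure_univ {f : Ω → ℝ≥0∞} (hf : AEMeasurable f μ)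
    {p : ℝ} (hp₀ : 0 ≤ p) (hp₁ : p ≤ 1) :
    ∫⁻ ω, f ω ^ p ∂μ ≤ (∫⁻ ω, f ω ∂μ) ^ p * μ Set.univ ^ (1 - p) := by
  simpa using ENNReal.lintegral_mul_norm_pow_le hf (aemeasurable_const (b := 1)) hp₀
    (sub_nonneg.2 hp₁) (add_sub_cancel p 1)

theorem lintegral_ofReal_pos [NeZero μ] {f : Ω → ℝ} (hf : AEMeasurable f μ)
    (hpos : ∀ᵐ ω ∂μ, 0 < f ω) : 0 < ∫⁻ ω, ENNReal.ofReal (f ω) ∂μ := by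
  refine pos_iff_ne_zero.2 fun hzero ↦ ?_
  rw [lintegral_eq_zero_iff' hf.ennreal_ofReal] at hzero
  obtain ⟨ω, hω_zero, hω_pos⟩ := (hzero.and hpos).exists
  exact (ENNReal.ofReal_pos.2 hω_pos).ne' hω_zero

theorem rpow_mul_one_add_le {a t p : ℝ} (ha : 0 ≤ a) (ht : -1 ≤ t) (hp₀ : 0 ≤ p) (hp₁ : p ≤ 1) :
    (a * (1 + t)) ^ p ≤ a ^ p * (1 + p * t) := by
  rw [Real.mul_rpow ha (by linarith)]
  gcongr
  exact rpow_one_add_le_one_add_mul_self ht hp₀ hp₁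

theorem lintegral_ofReal_rpow_le_of_lintegral_le [IsProbabilityMeasure μ] {f : Ω → ℝ}
    (hf : AEMeasurable f μ) (hf₀ : 0 ≤ᵐ[μ] f) {a t p : ℝ} (ha : 0 ≤ a) (ht : -1 ≤ t)
    (hp₀ : 0 ≤ p) (hp₁ : p ≤ 1)
    (hmean : ∫⁻ ω, ENNReal.ofReal (f ω) ∂μ ≤ ENNReal.ofReal (a * (1 + t))) :
    ∫⁻ ω, ENNReal.ofReal (f ω ^ p) ∂μ ≤ ENNReal.ofReal (a ^ p * (1 + p * t)) := by
  have hbound : 0 ≤ a * (1 + t) := mul_nonneg ha (by linarith)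
  calc ∫⁻ ω, ENNReal.ofReal (f ω ^ p) ∂μ
      = ∫⁻ ω, ENNReal.ofReal (f ω) ^ p ∂μ :=
        lintegral_congr_ae <| hf₀.mono fun ω hω ↦ (ENNReal.ofReal_rpow_of_nonneg hω hp₀).symm
    _ ≤ (∫⁻ ω, ENNReal.ofReal (f ω) ∂μ) ^ p := by
        simpa using lintegral_rpow_le_rpow_lintegral_mul_measure_univ hf.ennreal_ofReal hp₀ hp₁
    _ ≤ ENNReal.ofReal (a * (1 + t)) ^ p := by gcongr
    _ = ENNReal.ofReal ((a * (1 + t)) ^ p) := ENNReal.ofReal_rpow_of_nonneg hbound hp₀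
    _ ≤ ENNReal.ofReal (a ^ p * (1 + p * t)) :=
        ENNReal.ofReal_le_ofReal (rpow_mul_one_add_le ha ht hp₀ hp₁)

theorem neg_one_lt_of_lintegral_ofReal_le [NeZero μ] {f : Ω → ℝ} (hf : AEMeasurable f μ)
    (hpos : ∀ᵐ ω ∂μ, 0 < f ω) {a t : ℝ} (ha : 0 ≤ a)
    (hmean : ∫⁻ ω, ENNReal.ofReal (f ω) ∂μ ≤ ENNReal.ofReal (a * (1 + t))) : -1 < t := by
  have hbound : 0 < a * (1 + t) :=
    ENNReal.ofReal_pos.1 ((lintegral_ofReal_pos hf hpos).trans_le hmean)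
  linarith [pos_of_mul_pos_right hbound ha]

end Measure

theorem stmt_15_general {E : Type*} [MeasurableSpace E] (Q : Kernel E E) [IsMarkovKernel Q]
    {γ s : ℝ} (hγ : 0 < γ) (hs : 1 ≤ s) {f V b : E → ℝ} (hf : Measurable f)
    (hpos : ∀ y, 0 < f y) {x : E} (hV : V x ≠ 0)
    (hdrift : ∫⁻ y, ENNReal.ofReal (f y) ∂(Q x)
      ≤ ENNReal.ofReal (f x + γ * (f x / V x) * b x)) :
    (∫⁻ y, ENNReal.ofReal (f y ^ (1 / s)) ∂(Q x)
        ≤ ENNReal.ofReal (f x ^ (1 / s) * (1 + γ / (s * V x) * b x)))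
      ∧ ((∫⁻ y, ENNReal.ofReal (f y ^ (1 / s)) ∂(Q x)).toReal - f x ^ (1 / s)) / γ
          ≤ f x ^ (1 / s) / (s * V x) * b x := by
  have hs₀ : 0 < s := zero_lt_one.trans_le hs
  have hp₀ : 0 ≤ 1 / s := by positivity
  have hp₁ : 1 / s ≤ 1 := (div_le_one hs₀).2 hs
  have hfx : 0 ≤ f x := (hpos x).le
  have hmean : ∫⁻ y, ENNReal.ofReal (f y) ∂(Q x)
      ≤ ENNReal.ofReal (f x * (1 + γ / V x * b x)) := by
    convert hdrift using 2
    field_simp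
  have ht : -1 ≤ γ / V x * b x :=
    (neg_one_lt_of_lintegral_ofReal_le hf.aemeasurable (.of_forall hpos) hfx hmean).le
  have hscale : γ / (s * V x) * b x = 1 / s * (γ / V x * b x) := by field_simp
  have hpower : ∫⁻ y, ENNReal.ofReal (f y ^ (1 / s)) ∂(Q x)
      ≤ ENNReal.ofReal (f x ^ (1 / s) * (1 + γ / (s * V x) * b x)) := by
    rw [hscale]
    exact lintegral_ofReal_rpow_le_of_lintegral_le hf.aemeasurable
      (.of_forall fun y ↦ (hpos y).le) hfx ht hp₀ hp₁ hmean
  have hbound : 0 ≤ f x ^ (1 / s) * (1 + γ / (s * V x) * b x) := by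
    rw [hscale]
    exact (Real.rpow_nonneg (mul_nonneg hfx (by linarith)) _).trans
      (rpow_mul_one_add_le hfx ht hp₀ hp₁)
  refine ⟨hpower, (div_le_iff₀ hγ).2 ?_⟩
  linear_combination ENNReal.toReal_le_of_le_ofReal hbound hpower

/-- Jensen step: if a Markov kernel `Q` on `E` satisfies, for some `γ > 0`,
`Q(ψ∘V)(x) ≤ ψ(V(x)) + γ (ψ(V(x))/V(x))(β − α φ(V(x)))` for every `x`, then for every
`s ≥ 1` and every `x`,
`Q((ψ∘V)^{1/s})(x) ≤ (ψ(V(x)))^{1/s} (1 + (γ/(s V(x))) (β − α φ(V(x))))`; equivalently,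
with `Ã_γ f := (Qf − f)/γ`,
`Ã_γ((ψ∘V)^{1/s})(x) ≤ ((ψ(V(x)))^{1/s}/(s V(x))) (β − α φ(V(x)))`.
Integrals of nonnegative functions against the kernel are taken in `[0,∞]`. -/
theorem stmt_15 {E : Type*} [MeasurableSpace E]
    (Q : Kernel E E) [IsMarkovKernel Q]
    (γ s vstar α β : ℝ) (hγ : 0 < γ) (hs : 1 ≤ s) (hv : 0 < vstar) (hα : 0 < α)
    (V : E → ℝ) (hVmeas : Measurable V) (hVlb : ∀ x, vstar ≤ V x)
    (ψ φ : ℝ → ℝ) (hψmeas : Measurable ψ) (hφmeas : Measurable φ)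
    (hψpos : ∀ y, vstar ≤ y → 0 < ψ y) (hφpos : ∀ y, vstar ≤ y → 0 < φ y)
    (hyp : ∀ x, ∫⁻ y, ENNReal.ofReal (ψ (V y)) ∂(Q x)
      ≤ ENNReal.ofReal (ψ (V x) + γ * (ψ (V x) / V x) * (β - α * φ (V x)))) :
    ∀ x, (∫⁻ y, ENNReal.ofReal ((ψ (V y)) ^ (1 / s)) ∂(Q x)
        ≤ ENNReal.ofReal ((ψ (V x)) ^ (1 / s) * (1 + (γ / (s * V x)) * (β - α * φ (V x)))))
      ∧ ((∫⁻ y, ENNReal.ofReal ((ψ (V y)) ^ (1 / s)) ∂(Q x)).toReal - (ψ (V x)) ^ (1 / s)) / γ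
          ≤ ((ψ (V x)) ^ (1 / s) / (s * V x)) * (β - α * φ (V x)) :=
  fun x ↦ stmt_15_general Q hγ hs (b := fun y ↦ β - α * φ (V y)) (hψmeas.comp hVmeas)
    (fun y ↦ hψpos _ (hVlb y)) (hv.trans_le (hVlb x)).ne' (hyp x)
end

section
/- In the Markov switching Euler scheme setting, let ρ ∈ [1,2] and assume sup_n 𝔼|U_n|^ρ < ∞. Let f : ℝ^d × {1,…,M₀} → ℝ be such that for every z ∈ {1,…,M₀}, f(·,z) is twice continuously differentiable with compact support. Then there is a constant C_f > 0 such that for every n, almost surely, 𝔼[ | f(X̄_{n+1}, ζ_{n+1}) − f( X̄_n + γ_{n+1} b(X̄_n,ζ_n), ζ_n ) |^ρ | ℱ_n ] ≤ C_f γ_{n+1}^{ρ/2} max( 1, Tr[σσ*(X̄_n,ζ_n)]^{ρ/2} ). -/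
open MeasureTheory ProbabilityTheory Filter Set Matrix

/-- The action of a `d×d` real matrix on `ℝ^d` viewed as a Euclidean space. -/
noncomputable def mvE {d : ℕ} (A : Matrix (Fin d) (Fin d) ℝ) (v : EuclideanSpace ℝ (Fin d)) :
    EuclideanSpace ℝ (Fin d) :=
  (EuclideanSpace.equiv (Fin d) ℝ).symm (A.mulVec ((EuclideanSpace.equiv (Fin d) ℝ) v))

/-!
Split according to whether the chain jumps. On `{ζ_{n+1} = ζ_n}` only the space variable moves,
by `√γ σ U`, and the Lipschitz bound gives `(γ Tr[σσ*])^{ρ/2} |U|^ρ`; on `{ζ_{n+1} ≠ ζ_n}` the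
increment is merely bounded, but this event has conditional probability `O(γ)`, hence
`O(γ^{ρ/2})` since `ρ ≤ 2` and the steps are bounded.
-/

section ConditionalExpectation

variable {Ω ι : Type*} {m m' m0 : MeasurableSpace Ω} {μ : Measure Ω}

lemma condExp_apply_of_measurable_index [Countable ι] [MeasurableSpace ι]
    [MeasurableSingletonClass ι] {B : Type*} [NormedAddCommGroup B] [NormedSpace ℝ B]
    [CompleteSpace B] {Z : Ω → ι} (hZ : Measurable[m] Z) {h : ι → Ω → B}
    (hh : ∀ z, Integrable (h z) μ) (hhZ : Integrable (fun ω => h (Z ω) ω) μ) :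
    μ[fun ω => h (Z ω) ω | m] =ᵐ[μ] fun ω => (μ[h (Z ω) | m]) ω := by
  have on_fiber (z : ι) :
      ∀ᵐ ω ∂μ, Z ω = z → (μ[fun ω => h (Z ω) ω | m]) ω = (μ[h z | m]) ω := by
    have hs : MeasurableSet[m] (Z ⁻¹' {z}) := hZ (measurableSet_singleton z)
    have h_eq : (Z ⁻¹' {z}).indicator (fun ω => h (Z ω) ω) = (Z ⁻¹' {z}).indicator (h z) :=
      indicator_congr fun ω (hω : Z ω = z) => by rw [hω]
    filter_upwards [condExp_indicator hhZ hs, condExp_indicator (hh z) hs] with ω h₁ h₂ hω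
    rwa [h_eq, h₂, indicator_of_mem (mem_preimage.2 hω),
      indicator_of_mem (mem_preimage.2 hω), eq_comm] at h₁
  filter_upwards [ae_all_iff.2 on_fiber] with ω hω using hω (Z ω) rfl

lemma condExp_le_const_of_condExp_le [IsFiniteMeasure μ] (hm : m ≤ m') (hm' : m' ≤ m0)
    {g : Ω → ℝ} {r : ℝ} (h : μ[g | m'] ≤ᵐ[μ] fun _ => r) : μ[g | m] ≤ᵐ[μ] fun _ => r :=
  calc μ[g | m] =ᵐ[μ] μ[μ[g | m'] | m] := (condExp_condExp_of_le hm hm').symm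
    _ ≤ᵐ[μ] μ[fun _ => r | m] := condExp_mono integrable_condExp (integrable_const r) h
    _ = fun _ => r := condExp_const (hm.trans hm') r

lemma condProb_compl [IsFiniteMeasure μ] (hm : m ≤ m0) {s : Set Ω} (hs : MeasurableSet s) :
    μ⟦sᶜ | m⟧ =ᵐ[μ] fun ω => 1 - (μ⟦s | m⟧) ω := by
  have h_sub := condExp_sub (integrable_const (1 : ℝ))
    ((integrable_const (1 : ℝ)).indicator hs) m (μ := μ)
  rwa [condExp_const hm, ← indicator_compl] at h_sub

lemma condProb_ne_le [Countable ι] [MeasurableSpace ι] [MeasurableSingletonClass ι]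
    [IsFiniteMeasure μ] (hm : m ≤ m0) {Z Z' : Ω → ι} (hZ : Measurable[m] Z) (hZ' : Measurable Z')
    {r : ℝ} (h : ∀ z, ∀ᵐ ω ∂μ, Z ω = z → 1 - r ≤ (μ⟦Z' ⁻¹' {z} | m⟧) ω) :
    μ⟦{ω | Z' ω ≠ Z ω} | m⟧ ≤ᵐ[μ] fun _ => r := by
  have hs (z : ι) : MeasurableSet (Z' ⁻¹' {z}) := hZ' (measurableSet_singleton z)
  have h_ne : MeasurableSet {ω | Z' ω ≠ Z ω} :=
    (measurableSet_eq_fun hZ' (hZ.mono hm le_rfl)).compl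
  have h_freeze : μ⟦{ω | Z' ω ≠ Z ω} | m⟧ =ᵐ[μ] fun ω => (μ⟦(Z' ⁻¹' {Z ω})ᶜ | m⟧) ω :=
    condExp_apply_of_measurable_index hZ (h := fun z => (Z' ⁻¹' {z})ᶜ.indicator fun _ => (1 : ℝ))
      (fun z => (integrable_const 1).indicator (hs z).compl)
      ((integrable_const 1).indicator h_ne)
  filter_upwards [h_freeze, ae_all_iff.2 fun z => condProb_compl hm (hs z), ae_all_iff.2 h]
    with ω h_freeze h_compl h_stay
  rw [h_freeze, h_compl]
  linarith [h_stay (Z ω) rfl]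

-- `s * N` need not be integrable, so the pull-out property is applied after multiplication by the
-- bounded weight `(1 + s)⁻¹`.
lemma condExp_le_add_mul_of_le [IsFiniteMeasure μ] (hm : m ≤ m0) {g A s N : Ω → ℝ}
    (hg : Integrable g μ) (hA : Integrable A μ) (hN : Integrable N μ) (hs : Measurable[m] s)
    (hs0 : ∀ ω, 0 ≤ s ω) (h : ∀ ω, g ω ≤ A ω + s ω * N ω) :
    ∀ᵐ ω ∂μ, (μ[g | m]) ω ≤ (μ[A | m]) ω + s ω * (μ[N | m]) ω := by
  set w : Ω → ℝ := fun ω => (1 + s ω)⁻¹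
  have hw0 (ω : Ω) : 0 < w ω := inv_pos.2 (by linarith [hs0 ω])
  have hw : StronglyMeasurable[m] w := (hs.const_add 1).inv.stronglyMeasurable
  have hw1 (ω : Ω) : ‖w ω‖ ≤ 1 := by
    rw [Real.norm_of_nonneg (hw0 ω).le]
    exact inv_le_one_of_one_le₀ (by linarith [hs0 ω])
  have hws : StronglyMeasurable[m] (w * s) := hw.mul hs.stronglyMeasurable
  have hws1 (ω : Ω) : ‖(w * s) ω‖ ≤ 1 := by
    rw [Pi.mul_apply, Real.norm_of_nonneg (mul_nonneg (hw0 ω).le (hs0 ω))]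
    exact inv_mul_le_one_of_le₀ (by linarith) (by linarith [hs0 ω])
  have integrable_weighted {v k : Ω → ℝ} (hv : StronglyMeasurable[m] v) (hv1 : ∀ ω, ‖v ω‖ ≤ 1)
      (hk : Integrable k μ) : Integrable (v * k) μ :=
    hk.bdd_mul (hv.mono hm).aestronglyMeasurable (ae_of_all _ hv1)
  have h_weighted : μ[w * g | m] ≤ᵐ[μ] μ[w * A + w * s * N | m] := by
    refine condExp_mono (integrable_weighted hw hw1 hg)
      ((integrable_weighted hw hw1 hA).add (integrable_weighted hws hws1 hN))
      (ae_of_all _ fun ω => ?_)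
    calc w ω * g ω ≤ w ω * (A ω + s ω * N ω) := mul_le_mul_of_nonneg_left (h ω) (hw0 ω).le
      _ = w ω * A ω + w ω * s ω * N ω := by ring
  filter_upwards [h_weighted,
    condExp_add (integrable_weighted hw hw1 hA) (integrable_weighted hws hws1 hN) m,
    condExp_stronglyMeasurable_mul_of_bound hm hw hg 1 (ae_of_all _ hw1),
    condExp_stronglyMeasurable_mul_of_bound hm hw hA 1 (ae_of_all _ hw1),
    condExp_stronglyMeasurable_mul_of_bound hm hws hN 1 (ae_of_all _ hws1)]
    with ω h_le h_add h_g h_A h_N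
  rw [h_g, h_add, Pi.add_apply, h_A, h_N] at h_le
  simp only [Pi.mul_apply, mul_assoc, ← mul_add] at h_le
  exact le_of_mul_le_mul_left h_le (hw0 ω)

end ConditionalExpectation

section SwitchingRate

variable {Ω ι : Type*} {m0 : MeasurableSpace Ω} {P : Measure Ω} [IsFiniteMeasure P]

lemma exists_condProb_switch_le [Finite ι] [DecidableEq ι] [MeasurableSpace ι]
    [MeasurableSingletonClass ι] {ℱ : Filtration ℕ m0} {𝒢 : ℕ → MeasurableSpace Ω}
    (hℱ𝒢 : ∀ n, ℱ n ≤ 𝒢 n) (h𝒢 : ∀ n, 𝒢 n ≤ m0) {ζ : ℕ → Ω → ι}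
    (hζ : ∀ n, Measurable[ℱ n] (ζ n)) {q : ι → ι → ℝ} {γ e : ℕ → ℝ} (hγ : ∀ n, 0 ≤ γ n)
    (he : BddAbove (range e))
    (h : ∀ n z, ∀ᵐ ω ∂P,
      |(P[(fun ω' => if ζ (n + 1) ω' = z then (1 : ℝ) else 0) | 𝒢 n]) ω
        - ((if ζ n ω = z then (1 : ℝ) else 0) + γ n * q (ζ n ω) z)| ≤ γ n * e n) :
    ∃ κ : NNReal, ∀ n, P⟦{ω | ζ (n + 1) ω ≠ ζ n ω} | ℱ n⟧ ≤ᵐ[P] fun _ => κ * γ n := by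
  obtain ⟨E, hE⟩ := he
  obtain ⟨Q, hQ⟩ := (finite_range fun z => -q z z).bddAbove
  refine ⟨(Q + E).toNNReal, fun n => condExp_le_const_of_condExp_le (hℱ𝒢 n) (h𝒢 n) <|
    condProb_ne_le (h𝒢 n) ((hζ n).mono (hℱ𝒢 n) le_rfl) ((hζ (n + 1)).mono (ℱ.le _) le_rfl)
    fun z => ?_⟩
  have h_ind : (fun ω => if ζ (n + 1) ω = z then (1 : ℝ) else 0)
      = (ζ (n + 1) ⁻¹' {z}).indicator fun _ => 1 := by
    classical
    ext ω
    simp only [indicator_apply, mem_preimage, mem_singleton_iff]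
  have h_rate : -q z z + e n ≤ (Q + E).toNNReal :=
    (add_le_add (hQ ⟨z, rfl⟩) (hE ⟨n, rfl⟩)).trans (Real.le_coe_toNNReal _)
  filter_upwards [h n z] with ω hω hz
  rw [h_ind, hz, if_pos rfl] at hω
  linarith [(abs_le.1 hω).1, mul_le_mul_of_nonneg_right h_rate (hγ n)]

end SwitchingRate

section Increment

variable {E F ι Ω : Type*} [PseudoMetricSpace E] {f : E → ι → ℝ} {K L : NNReal} {ρ : ℝ}

lemma abs_sub_rpow_le_indicator_add (hρ : 0 ≤ ρ) (hK : ∀ x z, |f x z| ≤ K)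
    (hL : ∀ z, LipschitzWith L fun x => f x z) (X Y : Ω → E) (Z' Z : Ω → ι) (ω : Ω) :
    |f (X ω) (Z' ω) - f (Y ω) (Z ω)| ^ ρ
      ≤ (2 * K) ^ ρ * {ω | Z' ω ≠ Z ω}.indicator (fun _ => 1) ω
        + L ^ ρ * dist (X ω) (Y ω) ^ ρ := by
  by_cases h : Z' ω = Z ω
  · rw [indicator_of_notMem (by simpa using h), mul_zero, zero_add, h,
      ← Real.mul_rpow L.coe_nonneg dist_nonneg]
    exact Real.rpow_le_rpow (abs_nonneg _) ((hL (Z ω)).dist_le_mul (X ω) (Y ω)) hρ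
  · rw [indicator_of_mem h, mul_one]
    have h_abs : |f (X ω) (Z' ω) - f (Y ω) (Z ω)| ≤ 2 * K := by
      linarith [abs_sub (f (X ω) (Z' ω)) (f (Y ω) (Z ω)), hK (X ω) (Z' ω), hK (Y ω) (Z ω)]
    exact (Real.rpow_le_rpow (abs_nonneg _) h_abs hρ).trans
      (le_add_of_nonneg_right (by positivity))

variable [Countable ι] [MeasurableSpace ι] [MeasurableSingletonClass ι]

lemma measurable_comp_of_countable {α β : Type*} [MeasurableSpace α] [MeasurableSpace β]
    {_ : MeasurableSpace Ω} {g : α → ι → β} (hg : ∀ z, Measurable fun x => g x z) {X : Ω → α}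
    {Z : Ω → ι} (hX : Measurable X) (hZ : Measurable Z) : Measurable fun ω => g (X ω) (Z ω) :=
  (measurable_from_prod_countable_left (f := fun p => g p.1 p.2) hg).comp (hX.prodMk hZ)

variable [MeasurableSpace E] [OpensMeasurableSpace E]

lemma integrable_abs_sub_rpow {m0 : MeasurableSpace Ω} {P : Measure Ω} [IsFiniteMeasure P]
    (hρ : 0 ≤ ρ) (hK : ∀ x z, |f x z| ≤ K) (hf : ∀ z, Continuous fun x => f x z) {X Y : Ω → E}
    {Z' Z : Ω → ι} (hX : Measurable X) (hY : Measurable Y) (hZ' : Measurable Z')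
    (hZ : Measurable Z) : Integrable (fun ω => |f (X ω) (Z' ω) - f (Y ω) (Z ω)| ^ ρ) P := by
  have h_meas : Measurable fun ω => |f (X ω) (Z' ω) - f (Y ω) (Z ω)| ^ ρ :=
    ((measurable_comp_of_countable (fun z => (hf z).measurable) hX hZ').sub
      (measurable_comp_of_countable (fun z => (hf z).measurable) hY hZ)).abs.pow_const ρ
  refine .of_bound h_meas.aestronglyMeasurable ((K + K) ^ ρ) (ae_of_all _ fun ω => ?_)
  rw [Real.norm_of_nonneg (by positivity)]
  exact Real.rpow_le_rpow (abs_nonneg _) ((abs_sub _ _).trans (add_le_add (hK _ _) (hK _ _))) hρ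

lemma condExp_abs_sub_rpow_le [SeminormedAddCommGroup F] [MeasurableSpace F]
    [OpensMeasurableSpace F] {m m0 : MeasurableSpace Ω} {P : Measure Ω} [IsProbabilityMeasure P]
    (hm : m ≤ m0) (hρ : 0 ≤ ρ) (hK : ∀ x z, |f x z| ≤ K)
    (hL : ∀ z, LipschitzWith L fun x => f x z) {X Y : Ω → E} {Z' Z : Ω → ι} (hX : Measurable X)
    (hY : Measurable Y) (hZ' : Measurable Z') (hZ : Measurable Z) {U : Ω → F} (hU : Measurable U)
    (hUm : Indep (MeasurableSpace.comap U inferInstance) m P)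
    (hUρ : Integrable (fun ω => ‖U ω‖ ^ ρ) P) {s : Ω → ℝ} (hs : Measurable[m] s)
    (hs0 : ∀ ω, 0 ≤ s ω) (hXY : ∀ ω, dist (X ω) (Y ω) ^ ρ ≤ s ω * ‖U ω‖ ^ ρ) :
    ∀ᵐ ω ∂P, (P[fun ω => |f (X ω) (Z' ω) - f (Y ω) (Z ω)| ^ ρ | m]) ω
      ≤ (2 * K) ^ ρ * (P⟦{ω | Z' ω ≠ Z ω} | m⟧) ω
        + L ^ ρ * s ω * ∫ ω, ‖U ω‖ ^ ρ ∂P := by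
  have h_jump : Integrable ({ω | Z' ω ≠ Z ω}.indicator fun _ => (1 : ℝ)) P :=
    (integrable_const 1).indicator (measurableSet_eq_fun hZ' hZ).compl
  have h_meas : Measurable[MeasurableSpace.comap U inferInstance] fun ω => ‖U ω‖ ^ ρ :=
    (continuous_norm.measurable.comp (comap_measurable U)).pow_const ρ
  have h_noise : P[fun ω => ‖U ω‖ ^ ρ | m] =ᵐ[P] fun _ => ∫ ω, ‖U ω‖ ^ ρ ∂P :=
    condExp_indep_eq hU.comap_le hm h_meas.stronglyMeasurable hUm
  have h_le := condExp_le_add_mul_of_le hm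
    (integrable_abs_sub_rpow hρ hK (fun z => (hL z).continuous) hX hY hZ' hZ)
    (h_jump.smul ((2 * K : ℝ) ^ ρ)) hUρ (hs.const_mul ((L : ℝ) ^ ρ))
    (fun ω => mul_nonneg (by positivity) (hs0 ω)) fun ω =>
      (abs_sub_rpow_le_indicator_add hρ hK hL X Y Z' Z ω).trans <| by
        rw [mul_assoc]
        exact add_le_add_right (mul_le_mul_of_nonneg_left (hXY ω) (by positivity)) _
  filter_upwards [h_le, h_noise, condExp_smul ((2 * K : ℝ) ^ ρ)
    ({ω | Z' ω ≠ Z ω}.indicator fun _ => (1 : ℝ)) m] with ω h_le h_noise h_smul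
  rwa [h_noise, h_smul] at h_le

end Increment

section RealPowers

lemma rpow_le_rpow_half_mul_rpow {x a y ρ : ℝ} (hx : 0 ≤ x) (ha : 0 ≤ a) (hy : 0 ≤ y)
    (hρ : 0 ≤ ρ) (h : x ^ 2 ≤ a * y ^ 2) : x ^ ρ ≤ a ^ (ρ / 2) * y ^ ρ := by
  rw [Real.rpow_div_two_eq_sqrt ρ ha, ← Real.mul_rpow (Real.sqrt_nonneg a) hy]
  refine Real.rpow_le_rpow hx (abs_le_of_sq_le_sq' ?_ (by positivity)).2 hρ
  rwa [mul_pow, Real.sq_sqrt ha]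

lemma le_rpow_mul_rpow_of_le {x a r : ℝ} (hx : 0 < x) (hxa : x ≤ a) (hr : r ≤ 1) :
    x ≤ a ^ (1 - r) * x ^ r :=
  calc x = x ^ (1 - r) * x ^ r := by rw [← Real.rpow_add hx, sub_add_cancel, Real.rpow_one]
    _ ≤ a ^ (1 - r) * x ^ r := by gcongr

lemma dist_add_sqrt_smul_rpow_le {E : Type*} [SeminormedAddCommGroup E] [NormedSpace ℝ E]
    {y w : E} {g t u ρ : ℝ} (hg : 0 ≤ g) (ht : 0 ≤ t) (hu : 0 ≤ u) (hρ : 0 ≤ ρ)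
    (hw : ‖w‖ ^ 2 ≤ t * u ^ 2) :
    dist (y + Real.sqrt g • w) y ^ ρ ≤ (g * t) ^ (ρ / 2) * u ^ ρ := by
  refine rpow_le_rpow_half_mul_rpow dist_nonneg (mul_nonneg hg ht) hu hρ ?_
  rw [dist_eq_norm, add_sub_cancel_left, norm_smul, mul_pow, Real.norm_eq_abs, sq_abs,
    Real.sq_sqrt hg, mul_assoc]
  exact mul_le_mul_of_nonneg_left hw hg

end RealPowers

section UniformBounds

variable {E ι : Type*} [Finite ι] {f : E → ι → ℝ}

lemma exists_forall_abs_le_of_hasCompactSupport [TopologicalSpace E]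
    (hf : ∀ z, Continuous fun x => f x z)
    (hf' : ∀ z, HasCompactSupport fun x => f x z) : ∃ K : NNReal, ∀ x z, |f x z| ≤ K := by
  have h (z : ι) : ∀ᶠ K : NNReal in atTop, ∀ x, |f x z| ≤ K := by
    obtain ⟨C, hC⟩ := (hf' z).exists_bound_of_continuous (hf z)
    filter_upwards [eventually_ge_atTop C.toNNReal] with K hK x
    exact (hC x).trans (Real.toNNReal_le_iff_le_coe.1 hK)
  obtain ⟨K, hK⟩ := (eventually_all.2 h).exists
  exact ⟨K, fun x z => hK z x⟩

lemma exists_forall_lipschitzWith_of_hasCompactSupport [NormedAddCommGroup E] [NormedSpace ℝ E]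
    {n : WithTop ℕ∞} (hn : n ≠ 0) (hf : ∀ z, ContDiff ℝ n fun x => f x z)
    (hf' : ∀ z, HasCompactSupport fun x => f x z) :
    ∃ L : NNReal, ∀ z, LipschitzWith L fun x => f x z := by
  have h (z : ι) : ∀ᶠ L : NNReal in atTop, LipschitzWith L fun x => f x z := by
    obtain ⟨C, hC⟩ := (hf z).lipschitzWith_of_hasCompactSupport (hf' z) hn
    filter_upwards [eventually_ge_atTop C] with L hL using hC.weaken hL
  exact (eventually_all.2 h).exists

end UniformBounds

section Euclidean

variable {ι κ : Type*} [Fintype ι] [Fintype κ]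

lemma trace_mul_transpose_self_eq_sum_sq (A : Matrix ι κ ℝ) :
    trace (A * Aᵀ) = ∑ i, ∑ j, A i j ^ 2 := by
  simp [trace, mul_apply, sq]

lemma trace_mul_transpose_self_nonneg (A : Matrix ι κ ℝ) : 0 ≤ trace (A * Aᵀ) := by
  rw [trace_mul_transpose_self_eq_sum_sq]
  positivity

lemma measurable_trace_mul_transpose_self {α : Type*} [MeasurableSpace α] {A : α → Matrix ι κ ℝ}
    (hA : ∀ i j, Measurable fun x => A x i j) : Measurable fun x => trace (A x * (A x)ᵀ) := by
  simp_rw [trace_mul_transpose_self_eq_sum_sq]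
  fun_prop

lemma norm_mulVec_sq_le_trace_mul (A : Matrix ι κ ℝ) (v : EuclideanSpace ℝ κ) :
    ‖WithLp.toLp 2 (A *ᵥ v.ofLp)‖ ^ 2 ≤ trace (A * Aᵀ) * ‖v‖ ^ 2 := by
  rw [EuclideanSpace.real_norm_sq_eq, EuclideanSpace.real_norm_sq_eq,
    trace_mul_transpose_self_eq_sum_sq, Finset.sum_mul]
  exact Finset.sum_le_sum fun i _ => Finset.sum_mul_sq_le_sq_mul_sq _ _ _

end Euclidean

section Moments

variable {Ω : Type*} {m0 : MeasurableSpace Ω} {μ : Measure Ω}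

lemma memLp_two_of_integral_sq_ne_zero {ι : Type*} [Fintype ι] {U : Ω → EuclideanSpace ℝ ι}
    (hU : Measurable U) (h : ∀ i, ∫ ω, U ω i ^ 2 ∂μ ≠ 0) : MemLp U 2 μ :=
  .of_eval_piLp fun i =>
    (memLp_two_iff_integrable_sq (by fun_prop)).2 (.of_integral_ne_zero (h i))

lemma integrable_norm_rpow_of_memLp {F : Type*} [NormedAddCommGroup F] [IsFiniteMeasure μ]
    {U : Ω → F} {p : ENNReal} {ρ : ℝ} (hU : MemLp U p μ) (hρ : 0 ≤ ρ)
    (hρp : ENNReal.ofReal ρ ≤ p) : Integrable (fun ω => ‖U ω‖ ^ ρ) μ := by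
  simpa only [ENNReal.toReal_ofReal hρ] using (hU.mono_exponent hρp).integrable_norm_rpow'

end Moments

-- `σ x z u` plays the role of the noise term `σ(x,z) u`, and `τ x z` that of `Tr[σσ*(x,z)]`.
theorem stmt_19_general
    {E F ι Ω : Type*} [NormedAddCommGroup E] [NormedSpace ℝ E] [MeasurableSpace E] [BorelSpace E]
    [SecondCountableTopology E] [SeminormedAddCommGroup F] [MeasurableSpace F]
    [OpensMeasurableSpace F] [Countable ι] [MeasurableSpace ι] [MeasurableSingletonClass ι]
    {m0 : MeasurableSpace Ω} {P : Measure Ω} [IsProbabilityMeasure P] (ℱ : Filtration ℕ m0)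
    {b : E → ι → E} (hb : ∀ z, Measurable fun x => b x z)
    {τ : E → ι → ℝ} (hτ : ∀ z, Measurable fun x => τ x z) (hτ0 : ∀ x z, 0 ≤ τ x z)
    {σ : E → ι → F → E} (hσ : ∀ x z u, ‖σ x z u‖ ^ 2 ≤ τ x z * ‖u‖ ^ 2)
    {γbar : ℝ} {γ : ℕ → ℝ} (hγ : ∀ n, 1 ≤ n → γ n ∈ Ioc 0 γbar)
    {ρ : ℝ} (hρ : ρ ∈ Icc (0 : ℝ) 2)
    {U : ℕ → Ω → F} (hU : ∀ n, Measurable (U n))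
    (hUindep : ∀ n, Indep (MeasurableSpace.comap (U (n + 1)) inferInstance) (ℱ n) P)
    (hUρ : ∀ n, Integrable (fun ω => ‖U n ω‖ ^ ρ) P)
    {CU : ℝ} (hUmom : ∀ n, ∫ ω, ‖U n ω‖ ^ ρ ∂P ≤ CU)
    {ζ : ℕ → Ω → ι} (hζ : ∀ n, Measurable[ℱ n] (ζ n))
    {κ : NNReal}
    (hκ : ∀ n, P⟦{ω | ζ (n + 1) ω ≠ ζ n ω} | ℱ n⟧ ≤ᵐ[P] fun _ => κ * γ (n + 1))
    {X : ℕ → Ω → E} (hX : ∀ n, Measurable[ℱ n] (X n))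
    (hscheme : ∀ n ω, X (n + 1) ω = X n ω + γ (n + 1) • b (X n ω) (ζ n ω)
      + Real.sqrt (γ (n + 1)) • σ (X n ω) (ζ n ω) (U (n + 1) ω))
    {f : E → ι → ℝ} {K L : NNReal} (hK : ∀ x z, |f x z| ≤ K)
    (hL : ∀ z, LipschitzWith L fun x => f x z) :
    ∃ Cf : ℝ, 0 < Cf ∧ ∀ n : ℕ, ∀ᵐ ω ∂P,
      (P[fun ω' => |f (X (n + 1) ω') (ζ (n + 1) ω')
          - f (X n ω' + γ (n + 1) • b (X n ω') (ζ n ω')) (ζ n ω')| ^ ρ | ℱ n]) ω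
        ≤ Cf * γ (n + 1) ^ (ρ / 2) * max 1 (τ (X n ω) (ζ n ω) ^ (ρ / 2)) := by
  have hγbar : 0 < γbar := (hγ 1 le_rfl).1.trans_le (hγ 1 le_rfl).2
  refine ⟨max 1 ((2 * K) ^ ρ * κ * γbar ^ (1 - ρ / 2) + L ^ ρ * CU), by positivity, fun n => ?_⟩
  obtain ⟨hγ0, hγle⟩ := hγ (n + 1) (by omega)
  have hXn : Measurable (X n) := (hX n).mono (ℱ.le n) le_rfl
  have hζn : Measurable (ζ n) := (hζ n).mono (ℱ.le n) le_rfl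
  have h_dist (ω : Ω) :
      dist (X (n + 1) ω) (X n ω + γ (n + 1) • b (X n ω) (ζ n ω)) ^ ρ
        ≤ (γ (n + 1) * τ (X n ω) (ζ n ω)) ^ (ρ / 2) * ‖U (n + 1) ω‖ ^ ρ := by
    rw [hscheme]
    exact dist_add_sqrt_smul_rpow_le hγ0.le (hτ0 _ _) (norm_nonneg _) hρ.1 (hσ _ _ _)
  have h_step := condExp_abs_sub_rpow_le (ℱ.le n) hρ.1 hK hL
    ((hX (n + 1)).mono (ℱ.le _) le_rfl)
    (hXn.add ((measurable_comp_of_countable hb hXn hζn).const_smul (γ (n + 1))))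
    ((hζ (n + 1)).mono (ℱ.le _) le_rfl) hζn (hU (n + 1)) (hUindep n) (hUρ (n + 1))
    (((measurable_comp_of_countable hτ (hX n) (hζ n)).const_mul _).pow_const _)
    (fun ω => Real.rpow_nonneg (mul_nonneg hγ0.le (hτ0 _ _)) _) h_dist
  filter_upwards [h_step, hκ n] with ω h_step h_switch
  have h_half : γ (n + 1) ≤ γbar ^ (1 - ρ / 2) * γ (n + 1) ^ (ρ / 2) :=
    le_rpow_mul_rpow_of_le hγ0 hγle (by linarith [hρ.2])
  rw [Real.mul_rpow hγ0.le (hτ0 _ _)] at h_step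
  set g := γ (n + 1)
  set M := max 1 (τ (X n ω) (ζ n ω) ^ (ρ / 2))
  calc _ ≤ _ := h_step
    _ ≤ (2 * K) ^ ρ * (κ * (γbar ^ (1 - ρ / 2) * g ^ (ρ / 2)) * M)
        + L ^ ρ * (g ^ (ρ / 2) * M) * CU := by
      gcongr
      · exact h_switch.trans ((mul_le_mul_of_nonneg_left h_half κ.coe_nonneg).trans
          (le_mul_of_one_le_right (by positivity) (le_max_left _ _)))
      · exact le_max_right _ _
      · exact hUmom (n + 1)
    _ = ((2 * K) ^ ρ * κ * γbar ^ (1 - ρ / 2) + L ^ ρ * CU) * g ^ (ρ / 2) * M := by ring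
    _ ≤ _ := by gcongr; exact le_max_right _ _

/-- growth control for test functions in the domain, for the Euler scheme
of a Markov switching diffusion: if `f(·,z)` is `C²` with compact support for each `z`
and `sup_n 𝔼|U_n|^ρ < ∞`, then
`𝔼[|f(X̄_{n+1},ζ_{n+1}) − f(X̄_n + γ_{n+1} b(X̄_n,ζ_n), ζ_n)|^ρ | ℱ_n]
  ≤ C_f γ_{n+1}^{ρ/2} max(1, Tr[σσ*(X̄_n,ζ_n)]^{ρ/2})`. -/
theorem stmt_19
    (d M₀ : ℕ) (hd : 0 < d) (hM : 0 < M₀)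
    {Ω : Type*} {m0 : MeasurableSpace Ω} {P : Measure Ω} [IsProbabilityMeasure P]
    (ℱ : Filtration ℕ m0)
    (q : Fin M₀ → Fin M₀ → ℝ)
    (hqpos : ∀ z w, z ≠ w → 0 ≤ q z w) (hqsum : ∀ z, ∑ w, q z w = 0)
    (b : EuclideanSpace ℝ (Fin d) → Fin M₀ → EuclideanSpace ℝ (Fin d))
    (σ : EuclideanSpace ℝ (Fin d) → Fin M₀ → Matrix (Fin d) (Fin d) ℝ)
    (hbmeas : ∀ z, Measurable (fun x => b x z))
    (hσmeas : ∀ (z : Fin M₀) (i j : Fin d), Measurable (fun x => σ x z i j))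
    (γbar : ℝ) (hγbar : 0 < γbar) (γ : ℕ → ℝ)
    (hγ : ∀ n, 1 ≤ n → γ n ∈ Set.Ioc (0 : ℝ) γbar)
    (hγlim : Tendsto γ atTop (nhds 0))
    (hΓlim : Tendsto (fun n => ∑ k ∈ Finset.Icc 1 n, γ k) atTop atTop)
    -- the innovations (U_n): i.i.d., centered, unit covariance, independent of the past
    (U : ℕ → Ω → EuclideanSpace ℝ (Fin d))
    (hUmeas : ∀ n, Measurable (U n))
    (hUid : ∀ n m, Measure.map (U n) P = Measure.map (U m) P)
    (hUindep : ∀ n, Indep (MeasurableSpace.comap (U (n + 1)) inferInstance) (ℱ n) P)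
    (hU1 : ∀ n, ∫ ω, U n ω ∂P = 0)
    (hU2 : ∀ n, ∀ i j : Fin d, ∫ ω, U n ω i * U n ω j ∂P = if i = j then 1 else 0)
    -- the switching chain and the scheme
    (ζ : ℕ → Ω → Fin M₀) (Xb : ℕ → Ω → EuclideanSpace ℝ (Fin d))
    (hXad : ∀ n, Measurable[ℱ n] (Xb n)) (hζad : ∀ n, Measurable[ℱ n] (ζ n))
    (εζ : ℝ → ℝ) (hεζpos : ∀ c, 0 ≤ εζ c)
    (hεζlim : Tendsto εζ (nhdsWithin 0 (Set.Ioi 0)) (nhds 0))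
    (hζtrans : ∀ n, ∀ z : Fin M₀, ∀ᵐ ω ∂P,
      |(P[(fun ω' => if ζ (n + 1) ω' = z then (1 : ℝ) else 0) |
          (ℱ n ⊔ MeasurableSpace.comap (U (n + 1)) inferInstance)]) ω
        - ((if ζ n ω = z then (1 : ℝ) else 0) + γ (n + 1) * q (ζ n ω) z)|
        ≤ γ (n + 1) * εζ (γ (n + 1)))
    (hscheme : ∀ n ω, Xb (n + 1) ω = Xb n ω + γ (n + 1) • b (Xb n ω) (ζ n ω)
      + Real.sqrt (γ (n + 1)) • mvE (σ (Xb n ω) (ζ n ω)) (U (n + 1) ω))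
    -- data of the statement
    (ρ : ℝ) (hρ : ρ ∈ Set.Icc (1 : ℝ) 2)
    (CU : ℝ) (hUmom : ∀ n, ∫ ω, ‖U n ω‖ ^ ρ ∂P ≤ CU)
    (f : EuclideanSpace ℝ (Fin d) → Fin M₀ → ℝ)
    (hf : ∀ z, ContDiff ℝ 2 (fun x => f x z) ∧ HasCompactSupport (fun x => f x z)) :
    ∃ Cf : ℝ, 0 < Cf ∧ ∀ n : ℕ, ∀ᵐ ω ∂P,
      (P[(fun ω' => |f (Xb (n + 1) ω') (ζ (n + 1) ω')
            - f (Xb n ω' + γ (n + 1) • b (Xb n ω') (ζ n ω')) (ζ n ω')| ^ ρ) | ℱ n]) ω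
        ≤ Cf * γ (n + 1) ^ (ρ / 2)
          * max 1 ((Matrix.trace (σ (Xb n ω) (ζ n ω) * (σ (Xb n ω) (ζ n ω))ᵀ)) ^ (ρ / 2)) := by
  have h_error : BddAbove (range fun n => εζ (γ (n + 1))) :=
    (hεζlim.comp (tendsto_nhdsWithin_iff.2 ⟨hγlim.comp (tendsto_add_atTop_nat 1),
      Eventually.of_forall fun n => (hγ (n + 1) n.succ_pos).1⟩)).bddAbove_range
  obtain ⟨κ, hκ⟩ := exists_condProb_switch_le (fun _ => le_sup_left)
    (fun n => sup_le (ℱ.le n) (hUmeas (n + 1)).comap_le) hζad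
    (fun n => (hγ (n + 1) n.succ_pos).1.le) h_error hζtrans
  obtain ⟨K, hK⟩ := exists_forall_abs_le_of_hasCompactSupport (fun z => (hf z).1.continuous)
    fun z => (hf z).2
  obtain ⟨L, hL⟩ := exists_forall_lipschitzWith_of_hasCompactSupport two_ne_zero
    (fun z => (hf z).1) fun z => (hf z).2
  have hρ' : ρ ∈ Icc (0 : ℝ) 2 := ⟨zero_le_one.trans hρ.1, hρ.2⟩
  have hUρ (n : ℕ) : Integrable (fun ω => ‖U n ω‖ ^ ρ) P :=
    integrable_norm_rpow_of_memLp
      (memLp_two_of_integral_sq_ne_zero (hUmeas n) fun i => by simp [sq, hU2]) hρ'.1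
      (by simpa using ENNReal.ofReal_le_ofReal hρ.2)
  exact stmt_19_general ℱ hbmeas (fun z => measurable_trace_mul_transpose_self (hσmeas z))
    (fun x z => trace_mul_transpose_self_nonneg (σ x z))
    (fun x z => norm_mulVec_sq_le_trace_mul (σ x z)) hγ hρ' hUmeas hUindep hUρ hUmom hζad hκ hXad
    hscheme hK hL
end
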